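/- arXiv:0706.1091 — 7 statements merged into one kernel-verified Lean document; each statement's English description precedes it below -/
import Mathlib

section
/- For all measurable functions g, h : (0,1) → {−1,1}, one has ∫₀¹∫₀¹ f(x,y) g(x) h(y) dx dy ≤ 1/2; moreover the value 1/2 is attained by some such pair (g,h). In other words, 1/2 is the greatest element of the set { ∫₀¹∫₀¹ f(x,y) g(x) h(y) dx dy : g, h : (0,1) → {−1,1} measurable }. -/
open MeasureTheory

/-!
Integrating out `y` leaves `∫ g(x) F(x) dx` with `F(x) = ∫₀¹ f(x,y) h(y) dy = ∫₀¹ h - 2 ∫₀ˣ h`.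
This `F` is `2`-Lipschitz and `F(1) = -F(0)`, so it vanishes at some `z`. As `|F|` takes the same
value at `0` and `1`, it may be viewed as a function on the circle `ℝ / ℤ`, where it is bounded by
twice the distance to `z`; the mean distance to a point of this circle is `1/4`. For `h = 1`,
`F(x) = 1 - 2 x` attains this bound, and `g` is then chosen as the sign of `F`.
-/

open Set
open scoped NNReal

variable {a b : ℝ}

theorem ae_mem_Ioc_imp_of_forall_mem_Ioo {α : Type*} [PartialOrder α] [MeasurableSpace α]
    {μ : Measure α} [NullSingletonClass μ] {c d : α} {p : α → Prop} (hp : ∀ x ∈ Ioo c d, p x) :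
    ∀ᵐ x ∂μ, x ∈ Ioc c d → p x := by
  filter_upwards [Measure.ae_ne μ d] with x hxd hx
  exact hp x ⟨hx.1, hx.2.lt_of_ne hxd⟩

theorem integral_abs_neg_self {r : ℝ} (hr : 0 ≤ r) : ∫ x in -r..r, |x| = r ^ 2 := by
  have hint : ∀ p q : ℝ, IntervalIntegrable (fun x : ℝ => |x|) volume p q :=
    fun p q => continuous_abs.intervalIntegrable p q
  have right_half : ∫ x in (0 : ℝ)..r, |x| = r ^ 2 / 2 := by
    rw [intervalIntegral.integral_congr (g := fun x => x), integral_id]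
    · ring
    · intro x hx
      rw [uIcc_of_le hr] at hx
      exact abs_of_nonneg hx.1
  have left_half : ∫ x in -r..0, |x| = ∫ x in (0 : ℝ)..r, |x| := by
    simpa using (intervalIntegral.integral_comp_neg (a := 0) (b := r) fun x : ℝ => |x|).symm
  rw [← intervalIntegral.integral_add_adjacent_intervals (hint _ 0) (hint 0 _), left_half,
    right_half, add_halves]

theorem integral_norm_coe_addCircle {T : ℝ} (hT : 0 ≤ T) (t : ℝ) :
    ∫ x in t..t + T, ‖(x : AddCircle T)‖ = T ^ 2 / 4 := by
  have hper : Function.Periodic (fun x : ℝ => ‖(x : AddCircle T)‖) T := fun x => by simp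
  have norm_eq_abs : EqOn (fun x : ℝ => ‖(x : AddCircle T)‖) (fun x => |x|)
      (uIcc (-(T / 2)) (T / 2)) := by
    intro x hx
    rw [uIcc_of_le (by linarith)] at hx
    rcases hT.eq_or_lt with rfl | hT
    · exact AddCircle.norm_eq_of_zero
    · rw [AddCircle.norm_coe_eq_abs_iff T hT.ne', abs_of_pos hT]
      exact abs_le.2 hx
  calc ∫ x in t..t + T, ‖(x : AddCircle T)‖
      = ∫ x in -(T / 2)..-(T / 2) + T, ‖(x : AddCircle T)‖ := hper.intervalIntegral_add_eq _ _
    _ = ∫ x in -(T / 2)..T / 2, ‖(x : AddCircle T)‖ := by congr 1; ring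
    _ = ∫ x in -(T / 2)..T / 2, |x| := intervalIntegral.integral_congr norm_eq_abs
    _ = T ^ 2 / 4 := by rw [integral_abs_neg_self (by linarith)]; ring

theorem min_abs_sub_abs_le_norm_coe_addCircle {T : ℝ} (hT : 0 ≤ T) (x : ℝ) :
    min |x| (T - |x|) ≤ ‖(x : AddCircle T)‖ := by
  rw [AddCircle.norm_eq]
  obtain hn | hn := eq_or_ne (round (T⁻¹ * x)) 0
  · simp [hn]
  · have one_le : (1 : ℝ) ≤ |(round (T⁻¹ * x) : ℝ)| := mod_cast Int.one_le_abs hn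
    calc min |x| (T - |x|)
        ≤ T - |x| := min_le_right _ _
      _ ≤ |round (T⁻¹ * x) * T| - |x| := by
        rw [abs_mul, abs_of_nonneg hT]
        gcongr
        exact le_mul_of_one_le_left hT one_le
      _ ≤ |x - round (T⁻¹ * x) * T| := by
        rw [abs_sub_comm]
        exact abs_sub_abs_le_abs_sub _ _

section Antiperiodic

variable {E : Type*} [SeminormedAddCommGroup E] {F : ℝ → E} {K : ℝ≥0}

/-- If `F` is continued past `b` with its sign reversed, it takes the value `-F z` when it reaches
`z` again, and the arc from `x` to `z` through the endpoints has length `b - a - |x - z|`. -/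
theorem norm_add_le_of_lipschitzOnWith_of_eq_neg (hF : LipschitzOnWith K F (Icc a b))
    (hanti : F b = -F a) {x z : ℝ} (hx : x ∈ Icc a b) (hz : z ∈ Icc a b) :
    ‖F x + F z‖ ≤ K * (b - a - |x - z|) := by
  wlog hxz : x ≤ z generalizing x z
  · rw [add_comm, abs_sub_comm]
    exact this hz hx (le_of_not_ge hxz)
  have hab : a ≤ b := hx.1.trans hx.2
  calc ‖F x + F z‖ = ‖(F x - F a) + (F z - F b)‖ := by rw [hanti]; congr 1; abel
    _ ≤ ‖F x - F a‖ + ‖F z - F b‖ := norm_add_le _ _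
    _ ≤ K * ‖x - a‖ + K * ‖z - b‖ :=
      add_le_add (hF.norm_sub_le hx (left_mem_Icc.2 hab)) (hF.norm_sub_le hz (right_mem_Icc.2 hab))
    _ = K * (b - a - |x - z|) := by
      rw [Real.norm_of_nonneg (sub_nonneg.2 hx.1), Real.norm_of_nonpos (sub_nonpos.2 hz.2),
        abs_of_nonpos (sub_nonpos.2 hxz)]
      ring

theorem norm_le_mul_norm_coe_addCircle (hF : LipschitzOnWith K F (Icc a b)) (hanti : F b = -F a)
    {x z : ℝ} (hx : x ∈ Icc a b) (hz : z ∈ Icc a b) (hFz : F z = 0) :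
    ‖F x‖ ≤ K * ‖((x - z : ℝ) : AddCircle (b - a))‖ := by
  have hab : a ≤ b := hx.1.trans hx.2
  have inside : ‖F x‖ ≤ K * |x - z| := by
    simpa [hFz] using hF.norm_sub_le hx hz
  have through_endpoints : ‖F x‖ ≤ K * (b - a - |x - z|) := by
    simpa [hFz] using norm_add_le_of_lipschitzOnWith_of_eq_neg hF hanti hx hz
  calc ‖F x‖ ≤ K * min |x - z| (b - a - |x - z|) := by
        rw [mul_min_of_nonneg _ _ K.coe_nonneg]
        exact le_min inside through_endpoints
    _ ≤ K * ‖((x - z : ℝ) : AddCircle (b - a))‖ := by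
        gcongr
        exact min_abs_sub_abs_le_norm_coe_addCircle (sub_nonneg.2 hab) _

end Antiperiodic

theorem exists_mem_Icc_eq_zero_of_eq_neg {F : ℝ → ℝ} (hab : a ≤ b)
    (hF : ContinuousOn F (Icc a b)) (hanti : F b = -F a) : ∃ z ∈ Icc a b, F z = 0 := by
  rw [← uIcc_of_le hab] at hF ⊢
  refine intermediate_value_uIcc hF ?_
  rw [hanti, mem_uIcc, neg_nonneg, neg_nonpos, and_self, and_self]
  exact le_total _ _

theorem integral_abs_le_of_lipschitzOnWith_of_eq_neg {F : ℝ → ℝ} {K : ℝ≥0} (hab : a ≤ b)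
    (hF : LipschitzOnWith K F (Icc a b)) (hanti : F b = -F a) :
    ∫ x in a..b, |F x| ≤ K * ((b - a) ^ 2 / 4) := by
  obtain ⟨z, hz, hFz⟩ := exists_mem_Icc_eq_zero_of_eq_neg hab hF.continuousOn hanti
  have hcont : Continuous fun x : ℝ => K * ‖((x - z : ℝ) : AddCircle (b - a))‖ := by fun_prop
  calc ∫ x in a..b, |F x|
      ≤ ∫ x in a..b, K * ‖((x - z : ℝ) : AddCircle (b - a))‖ :=
        intervalIntegral.integral_mono_on hab
          (hF.continuousOn.abs.intervalIntegrable_of_Icc hab) (hcont.intervalIntegrable a b)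
          fun x hx => norm_le_mul_norm_coe_addCircle hF hanti hx hz hFz
    _ = K * ∫ x in a - z..a - z + (b - a), ‖(x : AddCircle (b - a))‖ := by
        rw [intervalIntegral.integral_const_mul,
          intervalIntegral.integral_comp_sub_right fun x : ℝ => ‖(x : AddCircle (b - a))‖]
        congr 2
        ring
    _ = K * ((b - a) ^ 2 / 4) := by rw [integral_norm_coe_addCircle (sub_nonneg.2 hab)]

section SignTransform

/-- The integral of `h` over `[a, b]` against the kernel which is `1` for `x < y` and `-1`
otherwise, as a function of `x`: the partial integral of `f(x,y) h(y)` with respect to `y`. -/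
noncomputable def signTransform (h : ℝ → ℝ) (a b x : ℝ) : ℝ :=
  ∫ y in a..b, (if x < y then 1 else -1) * h y

theorem setIntegral_setIntegral_sign_mul_mul (hab : a ≤ b) (g h : ℝ → ℝ) :
    ∫ x in Ioo a b, ∫ y in Ioo a b, (if x < y then (1 : ℝ) else -1) * g x * h y =
      ∫ x in a..b, g x * signTransform h a b x := by
  simp only [signTransform, intervalIntegral.integral_of_le hab, integral_Ioc_eq_integral_Ioo,
    ← integral_const_mul, mul_left_comm (g _), mul_assoc]

variable {h : ℝ → ℝ} {C : ℝ≥0}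

theorem signTransform_eq_sub (hint : IntervalIntegrable h volume a b) {x : ℝ}
    (hx : x ∈ Icc a b) :
    signTransform h a b x = (∫ y in a..b, h y) - 2 * ∫ y in a..x, h y := by
  have hind : IntervalIntegrable ({y | y ≤ x}.indicator h) volume a b :=
    ⟨hint.1.indicator measurableSet_Iic, hint.2.indicator measurableSet_Iic⟩
  calc signTransform h a b x = ∫ y in a..b, (h y - 2 * {y | y ≤ x}.indicator h y) := by
        refine intervalIntegral.integral_congr fun y _ => ?_
        rcases lt_or_ge x y with hxy | hyx
        · simp [hxy]
        · have hmem : y ∈ {y | y ≤ x} := hyx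
          simp only [if_neg hyx.not_gt, indicator_of_mem hmem]
          ring
    _ = (∫ y in a..b, h y) - 2 * ∫ y in a..x, h y := by
        rw [intervalIntegral.integral_sub hint (hind.const_mul 2),
          intervalIntegral.integral_const_mul, intervalIntegral.integral_indicator hx]

theorem signTransform_right_eq_neg_left (hab : a ≤ b) (hint : IntervalIntegrable h volume a b) :
    signTransform h a b b = -signTransform h a b a := by
  rw [signTransform_eq_sub hint (right_mem_Icc.2 hab),
    signTransform_eq_sub hint (left_mem_Icc.2 hab), intervalIntegral.integral_same]
  ring

theorem signTransform_one {x : ℝ} (hx : x ∈ Icc a b) :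
    signTransform (fun _ => 1) a b x = a + b - 2 * x := by
  rw [signTransform_eq_sub intervalIntegrable_const hx]
  simp only [integral_one]
  ring

theorem lipschitzOnWith_signTransform (hint : IntervalIntegrable h volume a b)
    (hC : ∀ᵐ y, y ∈ Ioc a b → |h y| ≤ C) :
    LipschitzOnWith (2 * C) (signTransform h a b) (Icc a b) := by
  refine .of_dist_le_mul fun x hx y hy => ?_
  have hint_left {t : ℝ} (ht : t ∈ Icc a b) : IntervalIntegrable h volume a t :=
    hint.mono_set (uIcc_subset_uIcc left_mem_uIcc (Icc_subset_uIcc ht))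
  have hle : |∫ t in x..y, h t| ≤ C * |y - x| :=
    intervalIntegral.norm_integral_le_of_norm_le_const_ae (f := h) <| by
      filter_upwards [hC] with t ht htxy
      exact ht ⟨(le_min hx.1 hy.1).trans_lt htxy.1, htxy.2.trans (max_le hx.2 hy.2)⟩
  calc dist (signTransform h a b x) (signTransform h a b y) = 2 * |∫ t in x..y, h t| := by
        rw [Real.dist_eq, signTransform_eq_sub hint hx, signTransform_eq_sub hint hy,
          sub_sub_sub_cancel_left, ← mul_sub, abs_mul, abs_two,
          intervalIntegral.integral_interval_sub_left (hint_left hy) (hint_left hx)]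
    _ ≤ 2 * (C * |y - x|) := by gcongr
    _ = (2 * C : ℝ≥0) * dist x y := by
        rw [dist_comm, Real.dist_eq, NNReal.coe_mul, NNReal.coe_ofNat, mul_assoc]

theorem abs_integral_mul_signTransform_le {g : ℝ → ℝ} {D : ℝ≥0} (hab : a ≤ b)
    (hint : IntervalIntegrable h volume a b) (hD : ∀ᵐ x, x ∈ Ioc a b → |g x| ≤ D)
    (hC : ∀ᵐ y, y ∈ Ioc a b → |h y| ≤ C) :
    |∫ x in a..b, g x * signTransform h a b x| ≤ D * C * ((b - a) ^ 2 / 2) := by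
  have hlip := lipschitzOnWith_signTransform hint hC
  have hint_abs : IntervalIntegrable (fun x => |signTransform h a b x|) volume a b :=
    hlip.continuousOn.abs.intervalIntegrable_of_Icc hab
  have hle : ∀ᵐ x, x ∈ Ioc a b → ‖g x * signTransform h a b x‖ ≤ D * |signTransform h a b x| := by
    filter_upwards [hD] with x hgx hx
    rw [Real.norm_eq_abs, abs_mul]
    exact mul_le_mul_of_nonneg_right (hgx hx) (abs_nonneg _)
  calc |∫ x in a..b, g x * signTransform h a b x| ≤ ∫ x in a..b, D * |signTransform h a b x| :=
        intervalIntegral.norm_integral_le_of_norm_le hab hle (hint_abs.const_mul _)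
    _ ≤ D * ((2 * C : ℝ≥0) * ((b - a) ^ 2 / 4)) := by
        rw [intervalIntegral.integral_const_mul]
        gcongr
        exact integral_abs_le_of_lipschitzOnWith_of_eq_neg hab hlip
          (signTransform_right_eq_neg_left hab hint)
    _ = D * C * ((b - a) ^ 2 / 2) := by push_cast; ring

theorem integral_sign_mul_signTransform_one (hab : a ≤ b) :
    ∫ x in a..b, (if x < (a + b) / 2 then 1 else -1) * signTransform (fun _ => 1) a b x =
      (b - a) ^ 2 / 2 := by
  calc ∫ x in a..b, (if x < (a + b) / 2 then 1 else -1) * signTransform (fun _ => 1) a b x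
      = ∫ x in a..b, 2 * |x - (a + b) / 2| := by
        refine intervalIntegral.integral_congr fun x hx => ?_
        rw [uIcc_of_le hab] at hx
        simp only [signTransform_one hx]
        split_ifs with hlt
        · rw [abs_of_neg (sub_neg.2 hlt)]
          ring
        · rw [abs_of_nonneg (sub_nonneg.2 (not_lt.1 hlt))]
          ring
    _ = 2 * ∫ x in -((b - a) / 2)..(b - a) / 2, |x| := by
        rw [intervalIntegral.integral_const_mul,
          intervalIntegral.integral_comp_sub_right fun x => |x|]
        congr 2 <;> ring
    _ = (b - a) ^ 2 / 2 := by
        rw [integral_abs_neg_self (by linarith)]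
        ring

end SignTransform

theorem bell_example1_dim1_general (hab : a ≤ b) {S : Set ℝ} (hS : {1, -1} ⊆ S)
    (hS_le : S ⊆ Icc (-1) 1) :
    IsGreatest
      {I : ℝ | ∃ g h : ℝ → ℝ, Measurable g ∧ Measurable h ∧
        (∀ x ∈ Ioo a b, g x ∈ S) ∧ (∀ y ∈ Ioo a b, h y ∈ S) ∧
        I = ∫ x in Ioo a b, ∫ y in Ioo a b, (if x < y then (1 : ℝ) else -1) * g x * h y}
      ((b - a) ^ 2 / 2) := by
  have one_mem : 1 ∈ S := hS (by simp)
  have neg_one_mem : -1 ∈ S := hS (by simp)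
  constructor
  · refine ⟨fun x => if x < (a + b) / 2 then 1 else -1, fun _ => 1,
      .ite measurableSet_Iio measurable_const measurable_const, measurable_const,
      fun x _ => ite_mem.2 ⟨fun _ => one_mem, fun _ => neg_one_mem⟩, fun _ _ => one_mem, ?_⟩
    rw [setIntegral_setIntegral_sign_mul_mul hab, integral_sign_mul_signTransform_one hab]
  · rintro _ ⟨g, h, -, hh, hgS, hhS, rfl⟩
    have hg_le : ∀ᵐ x, x ∈ Ioc a b → |g x| ≤ (1 : ℝ≥0) :=
      ae_mem_Ioc_imp_of_forall_mem_Ioo fun x hx => abs_le.2 (hS_le (hgS x hx))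
    have hh_le : ∀ᵐ y, y ∈ Ioc a b → |h y| ≤ (1 : ℝ≥0) :=
      ae_mem_Ioc_imp_of_forall_mem_Ioo fun y hy => abs_le.2 (hS_le (hhS y hy))
    have hint : IntervalIntegrable h volume a b := by
      rw [intervalIntegrable_iff_integrableOn_Ioc_of_le hab]
      exact Measure.integrableOn_of_bounded measure_Ioc_lt_top.ne hh.aestronglyMeasurable
        ((ae_restrict_iff' measurableSet_Ioc).2 hh_le)
    rw [setIntegral_setIntegral_sign_mul_mul hab]
    simpa using (le_abs_self _).trans (abs_integral_mul_signTransform_le hab hint hg_le hh_le)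

/-- Let `f : (0,1)×(0,1) → ℝ` be `1` if `x < y` and `-1` otherwise. Then `1/2` is the
greatest element of the set of values `∫∫ f(x,y) g(x) h(y)` over measurable
`g, h : (0,1) → {-1,1}`. -/
theorem bell_example1_dim1 :
    IsGreatest
      {I : ℝ | ∃ g h : ℝ → ℝ, Measurable g ∧ Measurable h ∧
        (∀ x ∈ Set.Ioo (0:ℝ) 1, g x = 1 ∨ g x = -1) ∧
        (∀ y ∈ Set.Ioo (0:ℝ) 1, h y = 1 ∨ h y = -1) ∧
        I = ∫ x in Set.Ioo (0:ℝ) 1, ∫ y in Set.Ioo (0:ℝ) 1,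
              (if x < y then (1:ℝ) else -1) * g x * h y}
      (1/2) := by
  simpa using bell_example1_dim1_general (zero_le_one' ℝ) (S := {1, -1}) subset_rfl
    (by simp [insert_subset_iff])
end

section
/- For all measurable functions g, h : 𝕋 → {−1,1}, one has ∬_{𝕋×𝕋} f(x,y) g(x) h(y) dx dy ≤ 1/2; moreover the value 1/2 is attained by some such pair (g,h). In other words, 1/2 is the greatest element of the set { ∬ f(x,y) g(x) h(y) dx dy : g, h : 𝕋 → {−1,1} measurable }. -/
open MeasureTheory

/-!
Fix `h` and let `F x = ∫ y, f x y * h y`. On lifts to `ℝ`, `F x` is twice the integral of `h` over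
the window of radius `1/4` around `x`, minus the integral of `h`; so `F` is `4`-Lipschitz, and it
is antiperiodic with antiperiod `1/2` since two opposite windows tile the circle. Hence `F` vanishes
at two antipodal points, and on each of the two half circles between them `|F|` lies below a tent
of slope `4`, which bounds `∫ |F|` by `2 * 4 * (1/2)² / 4 = 1/2`. The best `g` for a given `h` is
the sign of `F`. For `h = f 0` the function `F` is itself the tent `1 - 4 * dist 0 x`, so that the
bound is attained.
-/

open Set
open scoped Interval NNReal

theorem lipschitzWith_intervalIntegral_sub_add {E : Type*} [NormedAddCommGroup E]
    [NormedSpace ℝ E] {f : ℝ → E} {C : ℝ≥0} (hf : ∀ a b, IntervalIntegrable f volume a b)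
    (hC : ∀ t, ‖f t‖ ≤ C) (r : ℝ) :
    LipschitzWith (2 * C) fun x ↦ ∫ t in (x - r)..(x + r), f t := by
  refine LipschitzWith.of_dist_le_mul fun x y ↦ ?_
  have bound (a b : ℝ) : ‖∫ t in a..b, f t‖ ≤ C * |b - a| :=
    intervalIntegral.norm_integral_le_of_norm_le_const fun t _ ↦ hC t
  calc dist (∫ t in (x - r)..(x + r), f t) (∫ t in (y - r)..(y + r), f t)
      = ‖(∫ t in (x - r)..(y - r), f t) - ∫ t in (x + r)..(y + r), f t‖ := by
        rw [dist_eq_norm,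
          intervalIntegral.integral_interval_sub_interval_comm (hf _ _) (hf _ _) (hf _ _)]
    _ ≤ C * |y - r - (x - r)| + C * |y + r - (x + r)| :=
        (norm_sub_le _ _).trans (add_le_add (bound _ _) (bound _ _))
    _ = ↑(2 * C) * dist x y := by
        rw [sub_sub_sub_cancel_right, add_sub_add_right_eq_sub, abs_sub_comm, Real.dist_eq]
        push_cast
        ring

section LipschitzVanishing

variable {E : Type*} [NormedAddCommGroup E] {f : ℝ → E} {K : ℝ≥0} {a b : ℝ}

theorem setIntegral_uIoc_norm_le_of_lipschitzWith_of_eq_zero (hf : LipschitzWith K f)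
    (ha : f a = 0) (b : ℝ) : ∫ t in Ι a b, ‖f t‖ ≤ K * |b - a| ^ 2 / 2 := by
  have integrableOn {g : ℝ → ℝ} (hg : Continuous g) : IntegrableOn g (Ι a b) :=
    (hg.intervalIntegrable a b).def'
  calc ∫ t in Ι a b, ‖f t‖ ≤ ∫ t in Ι a b, K * |t - a| ^ 1 :=
        integral_mono (integrableOn hf.continuous.norm) (integrableOn (by fun_prop)) fun t ↦ by
          simpa [ha, Real.dist_eq] using hf.dist_le_mul t a
    _ = K * |b - a| ^ 2 / 2 := by
        rw [integral_const_mul, integral_pow_abs_sub_uIoc]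
        norm_num [mul_div_assoc]

theorem integral_norm_le_of_lipschitzWith_of_eq_zero (hf : LipschitzWith K f) (hab : a ≤ b)
    (ha : f a = 0) (hb : f b = 0) : ∫ t in a..b, ‖f t‖ ≤ K * (b - a) ^ 2 / 4 := by
  have hi (p q : ℝ) : IntervalIntegrable (fun t ↦ ‖f t‖) volume p q :=
    hf.continuous.norm.intervalIntegrable p q
  have left := setIntegral_uIoc_norm_le_of_lipschitzWith_of_eq_zero hf ha ((a + b) / 2)
  have right := setIntegral_uIoc_norm_le_of_lipschitzWith_of_eq_zero hf hb ((a + b) / 2)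
  rw [uIoc_of_le (by linarith), ← intervalIntegral.integral_of_le (by linarith), sq_abs] at left
  rw [uIoc_of_ge (by linarith), ← intervalIntegral.integral_of_le (by linarith), sq_abs] at right
  rw [← intervalIntegral.integral_add_adjacent_intervals (hi a ((a + b) / 2)) (hi _ b)]
  linarith

end LipschitzVanishing

theorem exists_eq_zero_of_antiperiodic {α : Type*} [TopologicalSpace α] [PreconnectedSpace α]
    [Nonempty α] [Add α] {f : α → ℝ} {c : α} (hf : Continuous f)
    (hc : Function.Antiperiodic f c) : ∃ z, f z = 0 := by
  obtain ⟨x⟩ := ‹Nonempty α›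
  have hx := hc x
  rcases le_total (f x) 0 with h | h
  · exact mem_range_of_exists_le_of_exists_ge hf ⟨x, h⟩ ⟨x + c, by linarith⟩
  · exact mem_range_of_exists_le_of_exists_ge hf ⟨x + c, by linarith⟩ ⟨x, h⟩

theorem periodic_abs_of_antiperiodic {α β : Type*} [Add α] [Lattice β] [AddGroup β]
    {f : α → β} {c : α} (hc : Function.Antiperiodic f c) :
    Function.Periodic (fun x ↦ |f x|) c := fun x ↦ by
  simp only [hc x, abs_neg]

theorem integral_abs_le_of_lipschitzWith_of_antiperiodic {f : ℝ → ℝ} {K : ℝ≥0} {c : ℝ}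
    (hf : LipschitzWith K f) (h0 : 0 ≤ c) (hc : Function.Antiperiodic f c) (a : ℝ) :
    ∫ t in a..(a + c), |f t| ≤ K * c ^ 2 / 4 := by
  obtain ⟨z, hz⟩ := exists_eq_zero_of_antiperiodic hf.continuous hc
  rw [(periodic_abs_of_antiperiodic hc).intervalIntegral_add_eq a z]
  simpa using integral_norm_le_of_lipschitzWith_of_eq_zero hf (le_add_of_nonneg_right h0) hz
    (by rw [hc z, hz, neg_zero])

theorem integral_abs_sub_center (c : ℝ) {r : ℝ} (hr : 0 ≤ r) :
    ∫ t in (c - r)..(c + r), |t - c| = r ^ 2 := by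
  have hi (p q : ℝ) : IntervalIntegrable (fun t ↦ |t - c|) volume p q :=
    Continuous.intervalIntegrable (by fun_prop) p q
  have left := integral_pow_abs_sub_uIoc (a := c) (b := c - r) 1
  have right := integral_pow_abs_sub_uIoc (a := c) (b := c + r) 1
  simp only [pow_one, sub_sub_cancel_left, abs_neg, uIoc_of_ge (sub_le_self c hr)] at left
  simp only [pow_one, add_sub_cancel_left, uIoc_of_le (le_add_of_nonneg_right hr)] at right
  rw [← intervalIntegral.integral_add_adjacent_intervals (hi _ c) (hi c _),
    intervalIntegral.integral_of_le (sub_le_self c hr),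
    intervalIntegral.integral_of_le (le_add_of_nonneg_right hr), left, right, abs_of_nonneg hr]
  norm_num

section ArcKernel

variable {T : ℝ}

/-- The kernel on the circle of length `T` which is `1` on pairs of points less than a quarter of
the circle apart, and `-1` on all other pairs. -/
noncomputable def arcKernel (x y : AddCircle T) : ℝ := if dist x y < T / 4 then 1 else -1

theorem arcKernel_eq_one_or (x y : AddCircle T) : arcKernel x y = 1 ∨ arcKernel x y = -1 :=
  ite_eq_or_eq _ _ _

theorem abs_arcKernel (x y : AddCircle T) : |arcKernel x y| = 1 := by
  rcases arcKernel_eq_one_or x y with h | h <;> simp only [h, abs_neg, abs_one]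

theorem measurable_arcKernel (x : AddCircle T) : Measurable (arcKernel x) :=
  Measurable.ite (measurableSet_lt (by fun_prop) measurable_const) measurable_const
    measurable_const

theorem arcKernel_coe_of_abs_sub_lt {x y : ℝ} (h : |x - y| < T / 4) :
    arcKernel (x : AddCircle T) y = 1 := by
  refine if_pos (lt_of_le_of_lt ?_ h)
  rw [dist_eq_norm, ← AddCircle.coe_sub]
  exact QuotientAddGroup.norm_mk_le_norm

theorem arcKernel_coe_of_abs_sub_antipode_le {x y : ℝ} (h : |y - (x + T / 2)| ≤ T / 4) :
    arcKernel (x : AddCircle T) y = -1 := by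
  refine if_neg (not_lt.2 ?_)
  have antipode : |T| / 2 = dist ((x + T / 2 : ℝ) : AddCircle T) x := by
    rw [dist_eq_norm, ← AddCircle.coe_sub, add_sub_cancel_left, AddCircle.norm_half_period_eq]
  have near : dist (y : AddCircle T) ((x + T / 2 : ℝ) : AddCircle T) ≤ T / 4 := by
    rw [dist_eq_norm, ← AddCircle.coe_sub]
    exact QuotientAddGroup.norm_mk_le_norm.trans h
  have := dist_triangle_left ((x + T / 2 : ℝ) : AddCircle T) x y
  rw [dist_comm (x : AddCircle T) y]
  linarith [le_abs_self T]

end ArcKernel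

section ArcTransform

variable {T : ℝ} [hT : Fact (0 < T)]

theorem intervalIntegrable_addCircle_coe {E : Type*} [NormedAddCommGroup E] {u : AddCircle T → E}
    (hu : Integrable u) (a b : ℝ) : IntervalIntegrable (fun t : ℝ ↦ u t) volume a b := by
  have periodic : Function.Periodic (fun t : ℝ ↦ u t) T := fun t ↦ by
    simp only [AddCircle.coe_add_period]
  refine periodic.intervalIntegrable₀ hT.out.ne' ?_ a b
  rw [intervalIntegrable_iff_integrableOn_Ioc_of_le hT.out.le]
  have := (AddCircle.measurePreserving_mk T 0).integrable_comp_of_integrable hu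
  rwa [zero_add] at this

theorem integral_addCircle_of_periodic_half {E : Type*} [NormedAddCommGroup E] [NormedSpace ℝ E]
    {u : AddCircle T → E} (hu : Integrable u)
    (hp : Function.Periodic (fun t : ℝ ↦ u t) (T / 2)) :
    ∫ x, u x = (2 : ℝ) • ∫ t in 0..(T / 2), u t := by
  have hi := intervalIntegrable_addCircle_coe hu
  have := hp.intervalIntegral_add_eq_add 0 (T / 2) hi
  rw [← AddCircle.intervalIntegral_preimage T 0, two_smul, show 0 + T = T / 2 + T / 2 by ring]
  simpa using this

theorem integral_addCircle_eq_add_antipodal_windows {E : Type*} [NormedAddCommGroup E]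
    [NormedSpace ℝ E] {u : AddCircle T → E} (hu : Integrable u) (x : ℝ) :
    ∫ y, u y = (∫ t in (x - T / 4)..(x + T / 4), u t) +
      ∫ t in (x + T / 2 - T / 4)..(x + T / 2 + T / 4), u t := by
  have hi := intervalIntegrable_addCircle_coe hu
  rw [← AddCircle.intervalIntegral_preimage T (x - T / 4),
    show x + T / 2 - T / 4 = x + T / 4 by ring,
    show x + T / 2 + T / 4 = x - T / 4 + T by ring,
    intervalIntegral.integral_add_adjacent_intervals (hi _ _) (hi _ _)]

/-- The integral operator with kernel `arcKernel`, for the measure of total mass `T`. -/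
noncomputable def arcTransform (u : AddCircle T → ℝ) (x : AddCircle T) : ℝ :=
  ∫ y, arcKernel x y * u y

variable {u : AddCircle T → ℝ}

theorem arcTransform_coe (hu : Integrable u) (x : ℝ) :
    arcTransform u x = 2 * (∫ t in (x - T / 4)..(x + T / 4), u t) - ∫ y, u y := by
  have h0 := hT.out
  have integrable : Integrable fun y ↦ arcKernel (x : AddCircle T) y * u y :=
    hu.bdd_mul (measurable_arcKernel _).aestronglyMeasurable
      (.of_forall fun y ↦ (abs_arcKernel _ y).le)
  have near : ∫ t in (x - T / 4)..(x + T / 4), arcKernel (x : AddCircle T) t * u t =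
      ∫ t in (x - T / 4)..(x + T / 4), u t :=
    intervalIntegral.integral_congr_Ioo_of_le (by linarith) fun t ht ↦ by
      rw [arcKernel_coe_of_abs_sub_lt (abs_lt.2 ⟨by linarith [ht.2], by linarith [ht.1]⟩), one_mul]
  have far : ∫ t in (x + T / 2 - T / 4)..(x + T / 2 + T / 4), arcKernel (x : AddCircle T) t * u t =
      -∫ t in (x + T / 2 - T / 4)..(x + T / 2 + T / 4), u t := by
    rw [← intervalIntegral.integral_neg]
    refine intervalIntegral.integral_congr_Ioo_of_le (by linarith) fun t ht ↦ ?_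
    rw [arcKernel_coe_of_abs_sub_antipode_le
      (abs_le.2 ⟨by linarith [ht.1], by linarith [ht.2]⟩), neg_one_mul]
  rw [arcTransform, integral_addCircle_eq_add_antipodal_windows integrable x,
    integral_addCircle_eq_add_antipodal_windows hu x, near, far]
  ring

theorem antiperiodic_arcTransform_coe (hu : Integrable u) :
    Function.Antiperiodic (fun t : ℝ ↦ arcTransform u t) (T / 2) := fun x ↦ by
  have tile := integral_addCircle_eq_add_antipodal_windows hu x
  simp only [arcTransform_coe hu]
  linarith

theorem lipschitzWith_arcTransform_coe (hu : Integrable u) {C : ℝ≥0} (hC : ∀ y, ‖u y‖ ≤ C) :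
    LipschitzWith (4 * C) fun t : ℝ ↦ arcTransform u t := by
  have window := lipschitzWith_intervalIntegral_sub_add (intervalIntegrable_addCircle_coe hu)
    (fun t ↦ hC t) (T / 4)
  refine LipschitzWith.of_dist_le_mul fun x y ↦ ?_
  have := window.dist_le_mul x y
  rw [arcTransform_coe hu, arcTransform_coe hu, dist_sub_right, Real.dist_eq, ← mul_sub, abs_mul,
    abs_two, ← Real.dist_eq]
  push_cast at this ⊢
  linarith

theorem continuous_arcTransform (hu : Integrable u) {C : ℝ≥0} (hC : ∀ y, ‖u y‖ ≤ C) :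
    Continuous (arcTransform u) :=
  (QuotientAddGroup.isQuotientMap_mk _).continuous_iff.2
    (lipschitzWith_arcTransform_coe hu hC).continuous

theorem integrable_arcTransform (hu : Integrable u) {C : ℝ≥0} (hC : ∀ y, ‖u y‖ ≤ C) :
    Integrable (arcTransform u) :=
  (continuous_arcTransform hu hC).integrable_of_hasCompactSupport (.of_compactSpace _)

theorem integral_abs_arcTransform (hu : Integrable u) {C : ℝ≥0} (hC : ∀ y, ‖u y‖ ≤ C) :
    ∫ x, |arcTransform u x| = 2 * ∫ t in 0..(T / 2), |arcTransform u (t : AddCircle T)| :=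
  integral_addCircle_of_periodic_half (integrable_arcTransform hu hC).abs
    (periodic_abs_of_antiperiodic (antiperiodic_arcTransform_coe hu))

theorem integral_abs_arcTransform_le (hu : Integrable u) {C : ℝ≥0} (hC : ∀ y, ‖u y‖ ≤ C) :
    ∫ x, |arcTransform u x| ≤ C * T ^ 2 / 2 := by
  have half := integral_abs_le_of_lipschitzWith_of_antiperiodic
    (lipschitzWith_arcTransform_coe hu hC) (half_pos hT.out).le
    (antiperiodic_arcTransform_coe hu) 0
  rw [zero_add] at half
  rw [integral_abs_arcTransform hu hC]
  push_cast at half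
  linarith

theorem integral_mul_arcTransform_le {g : AddCircle T → ℝ} (hg : ∀ x, |g x| ≤ 1)
    (hu : Integrable u) {C : ℝ≥0} (hC : ∀ y, ‖u y‖ ≤ C) :
    ∫ x, g x * arcTransform u x ≤ C * T ^ 2 / 2 := by
  have pointwise (x : AddCircle T) : ‖g x * arcTransform u x‖ ≤ |arcTransform u x| := by
    rw [norm_mul]
    exact mul_le_of_le_one_left (norm_nonneg _) (hg x)
  calc ∫ x, g x * arcTransform u x ≤ ‖∫ x, g x * arcTransform u x‖ := le_abs_self _
    _ ≤ ∫ x, |arcTransform u x| :=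
        norm_integral_le_of_norm_le (integrable_arcTransform hu hC).abs (.of_forall pointwise)
    _ ≤ C * T ^ 2 / 2 := integral_abs_arcTransform_le hu hC

theorem integrable_arcKernel (x : AddCircle T) : Integrable (arcKernel x) :=
  .of_bound (measurable_arcKernel x).aestronglyMeasurable 1
    (.of_forall fun y ↦ (abs_arcKernel x y).le)

theorem integral_window_arcKernel_zero {x : ℝ} (h0 : 0 ≤ x) (hx : x ≤ T / 2) :
    ∫ t in (x - T / 4)..(x + T / 4), arcKernel (0 : AddCircle T) t = T / 2 - 2 * x := by
  have hi := intervalIntegrable_addCircle_coe (integrable_arcKernel (0 : AddCircle T))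
  have near : ∫ t in (x - T / 4)..(T / 4), arcKernel (0 : AddCircle T) t =
      ∫ _ in (x - T / 4)..(T / 4), (1 : ℝ) :=
    intervalIntegral.integral_congr_Ioo_of_le (by linarith) fun t ht ↦
      arcKernel_coe_of_abs_sub_lt (abs_lt.2 ⟨by linarith [ht.2], by linarith [ht.1]⟩)
  have far : ∫ t in (T / 4)..(x + T / 4), arcKernel (0 : AddCircle T) t =
      ∫ _ in (T / 4)..(x + T / 4), (-1 : ℝ) :=
    intervalIntegral.integral_congr_Ioo_of_le (by linarith) fun t ht ↦
      arcKernel_coe_of_abs_sub_antipode_le (abs_le.2 ⟨by linarith [ht.1], by linarith [ht.2]⟩)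
  rw [← intervalIntegral.integral_add_adjacent_intervals (hi _ (T / 4)) (hi _ _), near, far,
    intervalIntegral.integral_const, intervalIntegral.integral_const, smul_eq_mul, smul_eq_mul]
  ring

theorem integral_arcKernel_zero : ∫ y, arcKernel (0 : AddCircle T) y = 0 := by
  have half_pos := half_pos hT.out
  rw [integral_addCircle_eq_add_antipodal_windows (integrable_arcKernel 0) 0, zero_add (T / 2),
    integral_window_arcKernel_zero le_rfl half_pos.le,
    integral_window_arcKernel_zero half_pos.le le_rfl]
  ring

theorem arcTransform_arcKernel_zero {x : ℝ} (h0 : 0 ≤ x) (hx : x ≤ T / 2) :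
    arcTransform (arcKernel (0 : AddCircle T)) x = T - 4 * x := by
  rw [arcTransform_coe (integrable_arcKernel 0), integral_window_arcKernel_zero h0 hx,
    integral_arcKernel_zero]
  ring

theorem integral_abs_arcTransform_arcKernel_zero :
    ∫ x, |arcTransform (arcKernel (0 : AddCircle T)) x| = T ^ 2 / 2 := by
  have h0 := hT.out
  have tent : ∫ t in 0..(T / 2), |arcTransform (arcKernel (0 : AddCircle T)) t| =
      ∫ t in (T / 4 - T / 4)..(T / 4 + T / 4), 4 * |t - T / 4| := by
    rw [sub_self, ← add_halves (T / 2), show T / 2 / 2 = T / 4 by ring]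
    refine intervalIntegral.integral_congr_Ioo_of_le (by linarith) fun t ht ↦ ?_
    rw [arcTransform_arcKernel_zero ht.1.le (by linarith [ht.2]),
      show T - 4 * t = -4 * (t - T / 4) by ring, abs_mul, abs_neg, Nat.abs_ofNat]
  rw [integral_abs_arcTransform (integrable_arcKernel 0) (C := 1)
    fun y ↦ (abs_arcKernel 0 y).le, tent, intervalIntegral.integral_const_mul,
    integral_abs_sub_center _ (by linarith)]
  ring

theorem exists_integral_mul_eq_integral_abs {α : Type*} [MeasurableSpace α] {μ : Measure α}
    {F : α → ℝ} (hF : Measurable F) :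
    ∃ g : α → ℝ, Measurable g ∧ (∀ x, g x = 1 ∨ g x = -1) ∧
      ∫ x, g x * F x ∂μ = ∫ x, |F x| ∂μ := by
  refine ⟨fun x ↦ if 0 ≤ F x then 1 else -1,
    Measurable.ite (measurableSet_le measurable_const hF) measurable_const measurable_const,
    fun x ↦ ite_eq_or_eq _ _ _, integral_congr_ae (.of_forall fun x ↦ ?_)⟩
  rcases le_or_gt 0 (F x) with h | h
  · simp only [if_pos h, one_mul, abs_of_nonneg h]
  · simp only [if_neg h.not_ge, neg_one_mul, abs_of_neg h]

theorem integral_integral_arcKernel_mul_mul (g h : AddCircle T → ℝ) :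
    ∫ x, ∫ y, arcKernel x y * g x * h y = ∫ x, g x * arcTransform h x := by
  simp only [arcTransform, ← integral_const_mul, mul_left_comm, mul_assoc]

theorem bell_example2_dim1_general {V : Set ℝ} (one_mem : 1 ∈ V) (neg_one_mem : -1 ∈ V)
    (abs_le_one : ∀ v ∈ V, |v| ≤ 1) :
    IsGreatest
      {I : ℝ | ∃ g h : AddCircle T → ℝ, Measurable g ∧ Measurable h ∧
        (∀ x, g x ∈ V) ∧ (∀ y, h y ∈ V) ∧
        I = ∫ x, ∫ y, arcKernel x y * g x * h y}
      (T ^ 2 / 2) := by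
  have mem_of_sign {v : ℝ} (hv : v = 1 ∨ v = -1) : v ∈ V := by
    rcases hv with rfl | rfl <;> assumption
  simp only [integral_integral_arcKernel_mul_mul]
  constructor
  · let h : AddCircle T → ℝ := arcKernel 0
    have transform_continuous : Continuous (arcTransform h) :=
      continuous_arcTransform (C := 1) (integrable_arcKernel 0) fun y ↦ (abs_arcKernel 0 y).le
    obtain ⟨g, hg, g_sign, hgh⟩ :=
      exists_integral_mul_eq_integral_abs (μ := volume) transform_continuous.measurable
    exact ⟨g, h, hg, measurable_arcKernel 0, fun x ↦ mem_of_sign (g_sign x),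
      fun y ↦ mem_of_sign (arcKernel_eq_one_or 0 y),
      by rw [hgh, integral_abs_arcTransform_arcKernel_zero]⟩
  · rintro _ ⟨g, h, -, hh, hgV, hhV, rfl⟩
    have h_le (y) : ‖h y‖ ≤ (1 : ℝ≥0) := abs_le_one _ (hhV y)
    have h_integrable : Integrable h := .of_bound hh.aestronglyMeasurable 1 (.of_forall h_le)
    simpa using integral_mul_arcTransform_le (fun x ↦ abs_le_one _ (hgV x)) h_integrable h_le

end ArcTransform

/-- Let `𝕋 = ℝ/ℤ` be the circle of length 1 with its Haar probability measure, and let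
`f(x,y) = 1` if `dist x y < 1/4` and `-1` otherwise. Then `1/2` is the greatest element of
the set of values `∬ f(x,y) g(x) h(y)` over measurable `g, h : 𝕋 → {-1,1}`. -/
theorem bell_example2_dim1 :
    IsGreatest
      {I : ℝ | ∃ g h : UnitAddCircle → ℝ, Measurable g ∧ Measurable h ∧
        (∀ x, g x = 1 ∨ g x = -1) ∧
        (∀ y, h y = 1 ∨ h y = -1) ∧
        I = ∫ x : UnitAddCircle, ∫ y : UnitAddCircle,
              (if dist x y < 1/4 then (1:ℝ) else -1) * g x * h y}
      (1/2) := by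
  simpa [arcKernel] using bell_example2_dim1_general (T := 1) (V := {1, -1}) (by simp) (by simp)
    (by simp)
end

section
/- Let d ≥ 2 be a natural number. Then 2/π is the greatest element of the set { ∫₀¹∫₀¹ f(x,y) ⟨g(x), h(y)⟩ dx dy : g, h : (0,1) → ℝ^d measurable with ‖g(x)‖ = 1 and ‖h(y)‖ = 1 for almost every x, y }, where ⟨·,·⟩ and ‖·‖ are the Euclidean inner product and norm on ℝ^d. -/
open MeasureTheory
open scoped RealInnerProductSpace

open Set
open scoped ENNReal Real

/-!
Let `T` be the integral operator on `L²(0,1)` with kernel `f`. On functions with `φ 0 + φ 1 = 0` it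
inverts `-1/2 d/dx`, so it is diagonal in the orthonormal basis `exp ((2n+1)πi x)`, `n ∈ ℤ`, which
is the Fourier basis multiplied by `exp (πi x)`. Its eigenvalues have modulus `2 / (|2n+1| π)`, so
its norm is at most `2 / π` by Parseval. Parseval in the target space carries this bound over to
functions with values in a separable Hilbert space, and Cauchy–Schwarz gives the upper bound. For
equality take for `h` a half-turn of the unit circle, whose coordinates only involve the extremal
frequencies `n = 0` and `n = -1`, and for `g` its rotation by a right angle.
-/

/-- Lebesgue measure on the unit interval `(0,1)`. -/
local notation "μ₀₁" => volume.restrict (Ioo (0 : ℝ) 1)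

section HilbertSpace

lemma exists_orthonormal_of_le_rank {𝕜 E : Type*} [RCLike 𝕜] [NormedAddCommGroup E]
    [InnerProductSpace 𝕜 E] {n : ℕ} (hn : n ≤ Module.rank 𝕜 E) :
    ∃ v : Fin n → E, Orthonormal 𝕜 v :=
  let ⟨_, hv⟩ := Module.le_rank_iff.1 hn
  ⟨_, InnerProductSpace.gramSchmidtNormed_orthonormal hv⟩

variable {ι 𝕜 E : Type*} [RCLike 𝕜] [NormedAddCommGroup E] [InnerProductSpace 𝕜 E]

lemma dist_sq_of_orthonormal {v : ι → E} (hv : Orthonormal 𝕜 v) {i j : ι} (hij : i ≠ j) :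
    dist (v i) (v j) ^ 2 = 2 := by
  rw [dist_eq_norm, @norm_sub_sq 𝕜, hv.1, hv.1, hv.2 hij]
  norm_num

lemma countable_of_orthonormal [TopologicalSpace.SeparableSpace E] {v : ι → E}
    (hv : Orthonormal 𝕜 v) : Countable ι := by
  have hdisj : univ.PairwiseDisjoint fun i => Metric.ball (v i) (1 / 2) := by
    intro i _ j _ hij
    refine Metric.ball_disjoint_ball ?_
    nlinarith [dist_sq_of_orthonormal hv hij, dist_nonneg (x := v i) (y := v j)]
  exact countable_univ_iff.1 <| hdisj.countable_of_isOpen (fun _ _ => Metric.isOpen_ball)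
    fun i _ => Metric.nonempty_ball.2 one_half_pos

lemma tsum_enorm_inner_sq (b : HilbertBasis ι 𝕜 E) (x : E) :
    ∑' i, ‖inner 𝕜 (b i) x‖ₑ ^ 2 = ‖x‖ₑ ^ 2 := by
  have hsum : HasSum (fun i => ‖inner 𝕜 (b i) x‖ ^ 2) (‖x‖ ^ 2) := by
    simpa only [inner_mul_symm_re_eq_norm, norm_mul, norm_inner_symm x, ← sq,
      inner_self_eq_norm_sq] using RCLike.hasSum_re 𝕜 (b.hasSum_inner_mul_inner x x)
  simp_rw [← ofReal_norm, ← ENNReal.ofReal_pow (norm_nonneg _)]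
  rw [← hsum.tsum_eq, ENNReal.ofReal_tsum_of_nonneg (fun _ => by positivity) hsum.summable]

end HilbertSpace

section LTwo

variable {α : Type*} [MeasurableSpace α] {μ : Measure α}

lemma eLpNorm_two_sq_eq_lintegral {E : Type*} [NormedAddCommGroup E] (f : α → E) :
    eLpNorm f 2 μ ^ 2 = ∫⁻ x, ‖f x‖ₑ ^ 2 ∂μ := by
  simpa using eLpNorm_nnreal_pow_eq_lintegral (f := f) (μ := μ) (p := 2) two_ne_zero

lemma ofReal_integral_norm_sq {E : Type*} [NormedAddCommGroup E] {f : α → E} (hf : MemLp f 2 μ) :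
    ENNReal.ofReal (∫ x, ‖f x‖ ^ 2 ∂μ) = eLpNorm f 2 μ ^ 2 := by
  rw [eLpNorm_two_sq_eq_lintegral, ofReal_integral_eq_lintegral_ofReal
    ((memLp_two_iff_integrable_sq_norm hf.1).1 hf) (.of_forall fun _ => by positivity)]
  simp_rw [ENNReal.ofReal_pow (norm_nonneg _), ofReal_norm]

variable {ι 𝕜 E : Type*} [RCLike 𝕜] [NormedAddCommGroup E] [InnerProductSpace 𝕜 E]

lemma tsum_eLpNorm_two_inner_sq [Countable ι] (b : HilbertBasis ι 𝕜 E) {f : α → E}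
    (hf : AEStronglyMeasurable f μ) :
    ∑' i, eLpNorm (fun x => inner 𝕜 (b i) (f x)) 2 μ ^ 2 = eLpNorm f 2 μ ^ 2 := by
  simp_rw [eLpNorm_two_sq_eq_lintegral, ← tsum_enorm_inner_sq b]
  rw [lintegral_tsum fun i => (hf.const_inner.enorm.pow_const 2)]

lemma enorm_integral_inner_le {g u : α → E} (hg : AEStronglyMeasurable g μ)
    (hu : AEStronglyMeasurable u μ) :
    ‖∫ x, inner 𝕜 (g x) (u x) ∂μ‖ₑ ≤ eLpNorm g 2 μ * eLpNorm u 2 μ := by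
  refine (enorm_integral_le_lintegral_enorm _).trans ?_
  rw [← eLpNorm_one_eq_lintegral_enorm]
  simpa using eLpNorm_le_eLpNorm_mul_eLpNorm'_of_norm hg hu (inner 𝕜) 1
    (.of_forall fun x => by simpa using norm_inner_le_norm (𝕜 := 𝕜) (g x) (u x))

end LTwo

lemma integrable_Ioo_of_continuous {E : Type*} [NormedAddCommGroup E] {φ : ℝ → E}
    (hφ : Continuous φ) (a b : ℝ) : Integrable φ (volume.restrict (Ioo a b)) :=
  hφ.integrableOn_Icc.mono_set Ioo_subset_Icc_self

section OrderSign

/-- The kernel `f` of the theorem, extended to all of `ℝ × ℝ`. -/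
noncomputable def orderSign (x y : ℝ) : ℝ := if x < y then 1 else -1

lemma norm_orderSign (x y : ℝ) : ‖orderSign x y‖ = 1 := by
  unfold orderSign
  split_ifs <;> simp

lemma orderSign_swap {x y : ℝ} (h : x ≠ y) : orderSign y x = -orderSign x y := by
  rcases h.lt_or_gt with h | h <;> simp [orderSign, h, h.not_gt]

lemma measurable_orderSign {α : Type*} [MeasurableSpace α] {a b : α → ℝ} (ha : Measurable a)
    (hb : Measurable b) : Measurable fun p => orderSign (a p) (b p) :=
  Measurable.ite (measurableSet_lt ha hb) measurable_const measurable_const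

variable {E : Type*} [NormedAddCommGroup E] [NormedSpace ℝ E]

lemma integrable_orderSign_smul {α : Type*} [MeasurableSpace α] {μ : Measure α} {a b : α → ℝ}
    (ha : Measurable a) (hb : Measurable b) {k : α → E} (hk : Integrable k μ) :
    Integrable (fun p => orderSign (a p) (b p) • k p) μ :=
  hk.bdd_smul 1 (measurable_orderSign ha hb).aestronglyMeasurable
    (.of_forall fun p => (norm_orderSign (a p) (b p)).le)

/-- The integral operator on `L²(0,1)` with kernel `orderSign`, acting on vector-valued functions:
the operator `T` above. -/
noncomputable def orderSignTransform (h : ℝ → E) (x : ℝ) : E := ∫ y, orderSign x y • h y ∂μ₀₁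

lemma norm_orderSignTransform_le (h : ℝ → E) (x : ℝ) :
    ‖orderSignTransform h x‖ ≤ ∫ y, ‖h y‖ ∂μ₀₁ :=
  (norm_integral_le_integral_norm _).trans_eq <| by simp only [norm_smul, norm_orderSign, one_mul]

lemma memLp_orderSignTransform {h : ℝ → E} (hh : Integrable h μ₀₁) (p : ℝ≥0∞) :
    MemLp (orderSignTransform h) p μ₀₁ :=
  MemLp.of_bound (integrable_orderSign_smul measurable_fst measurable_snd
    (hh.comp_snd μ₀₁)).integral_prod_left.aestronglyMeasurable _
    (.of_forall (norm_orderSignTransform_le h))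

lemma integral_orderSign_smul_left (φ : ℝ → E) (y : ℝ) :
    ∫ x, orderSign x y • φ x ∂μ₀₁ = -orderSignTransform φ y := by
  rw [orderSignTransform, ← integral_neg]
  refine integral_congr_ae (ae_restrict_of_ae ?_)
  filter_upwards [Measure.ae_ne volume y] with x hx
  rw [orderSign_swap hx.symm, neg_smul]

lemma integral_mul_orderSignTransform {𝕜 : Type*} [RCLike 𝕜] {φ ψ : ℝ → 𝕜}
    (hφ : Integrable φ μ₀₁) (hψ : Integrable ψ μ₀₁) :
    ∫ x, φ x * orderSignTransform ψ x ∂μ₀₁ = -∫ x, orderSignTransform φ x * ψ x ∂μ₀₁ := by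
  have hint : Integrable (Function.uncurry fun x y => orderSign x y • (φ x * ψ y))
      (Measure.prod μ₀₁ μ₀₁) :=
    integrable_orderSign_smul measurable_fst measurable_snd (hφ.mul_prod hψ)
  calc ∫ x, φ x * orderSignTransform ψ x ∂μ₀₁
    _ = ∫ x, ∫ y, orderSign x y • (φ x * ψ y) ∂μ₀₁ ∂μ₀₁ := by
        simp only [orderSignTransform, ← integral_const_mul, mul_smul_comm]
    _ = ∫ y, ∫ x, orderSign x y • (φ x * ψ y) ∂μ₀₁ ∂μ₀₁ := integral_integral_swap hint
    _ = -∫ y, orderSignTransform φ y * ψ y ∂μ₀₁ := by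
        simp only [← smul_mul_assoc, integral_mul_const, integral_orderSign_smul_left, neg_mul,
          integral_neg]

lemma orderSignTransform_eq_sub {h : ℝ → E} (hh : Integrable h μ₀₁) {x : ℝ} (hx : x ∈ Ioo 0 1) :
    orderSignTransform h x = (∫ y in x..1, h y) - ∫ y in 0..x, h y := by
  have hleft : EqOn (fun y => orderSign x y • h y) (fun y => -h y) (Ioc 0 x) := fun y hy => by
    simp [orderSign, hy.2.not_gt]
  have hright : EqOn (fun y => orderSign x y • h y) h (Ioo x 1) := fun y hy => by
    simp [orderSign, hy.1]
  have hint : IntegrableOn (fun y => orderSign x y • h y) (Ioo 0 1) :=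
    integrable_orderSign_smul measurable_const measurable_id hh
  rw [← Ioc_union_Ioo_eq_Ioo hx.1.le hx.2] at hint
  rw [orderSignTransform, ← Ioc_union_Ioo_eq_Ioo hx.1.le hx.2, setIntegral_union
    (disjoint_left.2 fun y hy hy' => hy'.1.not_ge hy.2) measurableSet_Ioo hint.left_of_union
    hint.right_of_union, setIntegral_congr_fun measurableSet_Ioc hleft,
    setIntegral_congr_fun measurableSet_Ioo hright, integral_neg,
    intervalIntegral.integral_of_le hx.1.le, intervalIntegral.integral_of_le hx.2.le,
    integral_Ioc_eq_integral_Ioo (y := 1), sub_eq_neg_add]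

lemma orderSignTransform_of_hasDerivAt [CompleteSpace E] {φ φ' : ℝ → E}
    (hφ : ∀ x ∈ Icc 0 1, HasDerivAt φ (φ' x) x) (hφ' : Integrable φ' μ₀₁)
    (hanti : φ 0 + φ 1 = 0) {x : ℝ} (hx : x ∈ Ioo 0 1) :
    orderSignTransform φ' x = (-2 : ℝ) • φ x := by
  have hftc {a b : ℝ} (ha : 0 ≤ a) (hab : a ≤ b) (hb : b ≤ 1) :
      ∫ y in a..b, φ' y = φ b - φ a := by
    have hderiv : ∀ y ∈ uIcc a b, HasDerivAt φ (φ' y) y := fun y hy =>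
      hφ y (Icc_subset_Icc ha hb (uIcc_of_le hab ▸ hy))
    refine intervalIntegral.integral_eq_sub_of_hasDerivAt hderiv ?_
    rw [intervalIntegrable_iff_integrableOn_Ioo_of_le hab]
    exact IntegrableOn.mono_set hφ' (Ioo_subset_Ioo ha hb)
  rw [orderSignTransform_eq_sub hφ' hx, hftc le_rfl hx.1.le hx.2.le, hftc hx.1.le hx.2.le le_rfl,
    eq_neg_of_add_eq_zero_left hanti]
  module

end OrderSign

section Fourier

lemma orderSignTransform_exp {c : ℂ} (hc : Complex.exp c = -1) {x : ℝ} (hx : x ∈ Ioo 0 1) :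
    orderSignTransform (fun y : ℝ => Complex.exp (c * y)) x = -(2 / c) * Complex.exp (c * x) := by
  have hc0 : c ≠ 0 := by
    rintro rfl
    norm_num [Complex.ext_iff] at hc
  have hderiv (y : ℝ) : HasDerivAt (fun y : ℝ => c⁻¹ * Complex.exp (c * y))
      (Complex.exp (c * y)) y := by
    convert! (((Complex.ofRealCLM.hasDerivAt (x := y)).const_mul c).cexp.const_mul c⁻¹) using 1
    simp
    field_simp
  rw [orderSignTransform_of_hasDerivAt (fun y _ => hderiv y)
    (integrable_Ioo_of_continuous (by fun_prop) 0 1) (by simp [hc]) hx, Complex.real_smul]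
  push_cast
  ring

lemma exp_neg_odd_mul_pi_mul_I (n : ℤ) : Complex.exp (-((2 * n + 1) * π * Complex.I)) = -1 := by
  rw [Complex.exp_neg, show (2 * n + 1) * π * Complex.I =
    n * (2 * π * Complex.I) + π * Complex.I by ring, Complex.exp_add,
    Complex.exp_int_mul_two_pi_mul_I, Complex.exp_pi_mul_I]
  norm_num

/-- The coefficient of `u` at `x ↦ exp ((2n+1)πi x)`, in the orthonormal basis of `L²(0,1)` formed
by the exponentials of odd frequency. -/
noncomputable def oddFourierCoeff (u : ℝ → ℂ) (n : ℤ) : ℂ :=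
  ∫ x, Complex.exp (-((2 * n + 1) * π * Complex.I) * x) * u x ∂μ₀₁

lemma oddFourierCoeff_orderSignTransform {h : ℝ → ℂ} (hh : Integrable h μ₀₁) (n : ℤ) :
    oddFourierCoeff (orderSignTransform h) n =
      2 / -((2 * n + 1) * π * Complex.I) * oddFourierCoeff h n := by
  have hint : Integrable
      (fun x : ℝ => Complex.exp (-((2 * n + 1) * π * Complex.I) * x)) μ₀₁ :=
    integrable_Ioo_of_continuous (by fun_prop) 0 1
  rw [oddFourierCoeff, integral_mul_orderSignTransform hint hh, oddFourierCoeff, ← integral_neg,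
    ← integral_const_mul]
  refine setIntegral_congr_fun measurableSet_Ioo fun x hx => ?_
  simp only [orderSignTransform_exp (exp_neg_odd_mul_pi_mul_I n) hx]
  ring

lemma oddFourierCoeff_eq_fourierCoeffOn (u : ℝ → ℂ) (n : ℤ) :
    oddFourierCoeff u n =
      fourierCoeffOn zero_lt_one (fun x => Complex.exp (-(π * Complex.I) * x) * u x) n := by
  rw [fourierCoeffOn_eq_integral, intervalIntegral.integral_of_le zero_le_one,
    integral_Ioc_eq_integral_Ioo, oddFourierCoeff]
  simp only [sub_zero, div_one, one_smul, fourier_coe_apply, smul_eq_mul, ← mul_assoc,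
    ← Complex.exp_add]
  congr! 4
  push_cast
  ring

lemma hasSum_sq_norm_oddFourierCoeff {u : ℝ → ℂ} (hu : MemLp u 2 μ₀₁) :
    HasSum (fun n => ‖oddFourierCoeff u n‖ ^ 2) (∫ x, ‖u x‖ ^ 2 ∂μ₀₁) := by
  have hnorm (x : ℝ) : ‖Complex.exp (-(π * Complex.I) * x) * u x‖ = ‖u x‖ := by
    simp [Complex.norm_exp]
  have hL2 : MemLp (fun x : ℝ => Complex.exp (-(π * Complex.I) * x) * u x) 2
      (volume.restrict (Ioc 0 1)) := by
    rw [← Measure.restrict_congr_set Ioo_ae_eq_Ioc]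
    exact hu.of_le ((Continuous.aestronglyMeasurable (by fun_prop)).mul hu.1)
      (.of_forall fun x => (hnorm x).le)
  simpa only [← oddFourierCoeff_eq_fourierCoeffOn, hnorm, sub_zero, inv_one, one_smul,
    intervalIntegral.integral_of_le zero_le_one, integral_Ioc_eq_integral_Ioo] using
    hasSum_sq_fourierCoeffOn zero_lt_one hL2

lemma tsum_enorm_oddFourierCoeff_sq {u : ℝ → ℂ} (hu : MemLp u 2 μ₀₁) :
    ∑' n, ‖oddFourierCoeff u n‖ₑ ^ 2 = eLpNorm u 2 μ₀₁ ^ 2 := by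
  have hsum := hasSum_sq_norm_oddFourierCoeff hu
  rw [← ofReal_integral_norm_sq hu, ← hsum.tsum_eq,
    ENNReal.ofReal_tsum_of_nonneg (fun _ => by positivity) hsum.summable]
  simp_rw [ENNReal.ofReal_pow (norm_nonneg _), ofReal_norm]

lemma norm_two_div_odd_mul_pi_mul_I_le (n : ℤ) :
    ‖2 / -((2 * n + 1) * π * Complex.I)‖ ≤ 2 / π := by
  have hn : (1 : ℝ) ≤ ‖(2 * n + 1 : ℂ)‖ := by
    have : (1 : ℤ) ≤ |2 * n + 1| := Int.one_le_abs (by lia)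
    rw [show (2 * n + 1 : ℂ) = ((2 * n + 1 : ℤ) : ℂ) by push_cast; rfl, Complex.norm_intCast]
    exact_mod_cast this
  rw [norm_div, norm_neg, norm_mul, norm_mul, Complex.norm_I, mul_one, Complex.norm_real,
    Real.norm_of_nonneg Real.pi_pos.le, Complex.norm_ofNat]
  gcongr
  exact le_mul_of_one_le_left Real.pi_pos.le hn

end Fourier

section NormBound

lemma eLpNorm_orderSignTransform_le_of_complex {h : ℝ → ℂ} (hh : MemLp h 2 μ₀₁) :
    eLpNorm (orderSignTransform h) 2 μ₀₁ ≤ ENNReal.ofReal (2 / π) * eLpNorm h 2 μ₀₁ := by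
  have hint := hh.integrable one_le_two
  rw [← ENNReal.pow_le_pow_left_iff two_ne_zero, mul_pow,
    ← tsum_enorm_oddFourierCoeff_sq (memLp_orderSignTransform hint 2),
    ← tsum_enorm_oddFourierCoeff_sq hh, ← ENNReal.tsum_mul_left]
  refine ENNReal.tsum_le_tsum fun n => ?_
  rw [oddFourierCoeff_orderSignTransform hint, enorm_mul, mul_pow, ← ofReal_norm (2 / _)]
  gcongr
  exact norm_two_div_odd_mul_pi_mul_I_le n

lemma eLpNorm_orderSignTransform_le_of_real {h : ℝ → ℝ} (hh : MemLp h 2 μ₀₁) :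
    eLpNorm (orderSignTransform h) 2 μ₀₁ ≤ ENNReal.ofReal (2 / π) * eLpNorm h 2 μ₀₁ := by
  have hcoe (x : ℝ) : orderSignTransform (fun y => (h y : ℂ)) x = orderSignTransform h x := by
    simp only [orderSignTransform, Complex.real_smul, ← Complex.ofReal_mul,
      integral_complex_ofReal, smul_eq_mul]
  calc eLpNorm (orderSignTransform h) 2 μ₀₁
    _ = eLpNorm (orderSignTransform fun y => (h y : ℂ)) 2 μ₀₁ :=
        eLpNorm_congr_norm_ae (.of_forall fun x => by rw [hcoe, Complex.norm_real])
    _ ≤ ENNReal.ofReal (2 / π) * eLpNorm (fun y => (h y : ℂ)) 2 μ₀₁ :=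
        eLpNorm_orderSignTransform_le_of_complex hh.ofReal
    _ = ENNReal.ofReal (2 / π) * eLpNorm h 2 μ₀₁ := by
        rw [eLpNorm_congr_norm_ae (.of_forall fun x => Complex.norm_real (h x))]

variable {E : Type*} [NormedAddCommGroup E] [InnerProductSpace ℝ E] [CompleteSpace E]

lemma integral_orderSign_mul_inner {h : ℝ → E} (hh : Integrable h μ₀₁) (a : E) (x : ℝ) :
    ∫ y, orderSign x y * ⟪a, h y⟫ ∂μ₀₁ = ⟪a, orderSignTransform h x⟫ := by
  rw [orderSignTransform,
    ← integral_inner (integrable_orderSign_smul measurable_const measurable_id' hh)]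
  simp only [real_inner_smul_right]

lemma eLpNorm_orderSignTransform_le [TopologicalSpace.SeparableSpace E] {h : ℝ → E}
    (hh : MemLp h 2 μ₀₁) :
    eLpNorm (orderSignTransform h) 2 μ₀₁ ≤ ENNReal.ofReal (2 / π) * eLpNorm h 2 μ₀₁ := by
  obtain ⟨_, b, -⟩ := exists_hilbertBasis ℝ E
  have := countable_of_orthonormal b.orthonormal
  have hint := hh.integrable one_le_two
  rw [← ENNReal.pow_le_pow_left_iff two_ne_zero, mul_pow,
    ← tsum_eLpNorm_two_inner_sq b (memLp_orderSignTransform hint 2).1,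
    ← tsum_eLpNorm_two_inner_sq b hh.1, ← ENNReal.tsum_mul_left]
  refine ENNReal.tsum_le_tsum fun i => ?_
  rw [← mul_pow]
  gcongr
  simp only [← integral_orderSign_mul_inner hint]
  exact eLpNorm_orderSignTransform_le_of_real (hh.const_inner (b i))

lemma integral_integral_orderSign_mul_inner (g : ℝ → E) {h : ℝ → E} (hh : Integrable h μ₀₁) :
    ∫ x, ∫ y, orderSign x y * ⟪g x, h y⟫ ∂μ₀₁ ∂μ₀₁ = ∫ x, ⟪g x, orderSignTransform h x⟫ ∂μ₀₁ := by
  simp only [integral_orderSign_mul_inner hh]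

lemma enorm_integral_orderSign_mul_inner_le [TopologicalSpace.SeparableSpace E] {g h : ℝ → E}
    (hg : AEStronglyMeasurable g μ₀₁) (hh : MemLp h 2 μ₀₁) :
    ‖∫ x, ∫ y, orderSign x y * ⟪g x, h y⟫ ∂μ₀₁ ∂μ₀₁‖ₑ ≤
      ENNReal.ofReal (2 / π) * eLpNorm g 2 μ₀₁ * eLpNorm h 2 μ₀₁ := by
  have hint := hh.integrable one_le_two
  rw [integral_integral_orderSign_mul_inner g hint, mul_right_comm, mul_comm _ (eLpNorm g 2 μ₀₁)]
  grw [enorm_integral_inner_le hg (memLp_orderSignTransform hint 2).1,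
    eLpNorm_orderSignTransform_le hh]

lemma integral_orderSign_mul_inner_le_of_norm_eq_one [TopologicalSpace.SeparableSpace E]
    {g h : ℝ → E} (hg : AEStronglyMeasurable g μ₀₁) (hh : AEStronglyMeasurable h μ₀₁)
    (hg1 : ∀ᵐ x ∂μ₀₁, ‖g x‖ = 1) (hh1 : ∀ᵐ y ∂μ₀₁, ‖h y‖ = 1) :
    ∫ x, ∫ y, orderSign x y * ⟪g x, h y⟫ ∂μ₀₁ ∂μ₀₁ ≤ 2 / π := by
  have heLp {k : ℝ → E} (hk1 : ∀ᵐ x ∂μ₀₁, ‖k x‖ = 1) : eLpNorm k 2 μ₀₁ = 1 := by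
    rw [eLpNorm_congr_norm_ae (g := fun _ => (1 : ℝ)) (by simpa using hk1)]
    simp [eLpNorm_const]
  have hbound := enorm_integral_orderSign_mul_inner_le hg
    (MemLp.of_bound hh 1 (hh1.mono fun _ h => h.le))
  rw [heLp hg1, heLp hh1, mul_one, mul_one, ← ofReal_norm,
    ENNReal.ofReal_le_ofReal_iff (by positivity)] at hbound
  exact (Real.le_norm_self _).trans hbound

end NormBound

section HalfTurn

section NormedSpace

variable {E : Type*} [NormedAddCommGroup E] [NormedSpace ℝ E]

/-- The path `t ↦ cos (πt) u + sin (πt) v`, which for orthonormal `u` and `v` runs from `u` to `-u`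
along half of a unit circle. -/
noncomputable def halfTurn (u v : E) (t : ℝ) : E := Real.cos (π * t) • u + Real.sin (π * t) • v

lemma continuous_halfTurn (u v : E) : Continuous (halfTurn u v) := by
  unfold halfTurn
  fun_prop

lemma hasDerivAt_halfTurn (u v : E) (t : ℝ) :
    HasDerivAt (halfTurn u v) (π • halfTurn v (-u) t) t := by
  have hlin : HasDerivAt (fun t => π * t) π t := by simpa using (hasDerivAt_id t).const_mul π
  convert! (hlin.cos.smul_const u).add (hlin.sin.smul_const v) using 1
  simp only [halfTurn]
  module

lemma orderSignTransform_halfTurn [CompleteSpace E] (u v : E) {x : ℝ} (hx : x ∈ Ioo 0 1) :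
    orderSignTransform (halfTurn u v) x = (2 / π) • halfTurn v (-u) x := by
  have hderiv (t : ℝ) : HasDerivAt (π⁻¹ • halfTurn (-v) u) (halfTurn u v t) t := by
    simpa [smul_smul, Real.pi_ne_zero] using (hasDerivAt_halfTurn (-v) u t).const_smul π⁻¹
  rw [orderSignTransform_of_hasDerivAt (fun t _ => hderiv t)
    (integrable_Ioo_of_continuous (continuous_halfTurn u v) 0 1) (by simp [halfTurn]) hx]
  simp only [Pi.smul_apply, halfTurn]
  module

end NormedSpace

variable {E : Type*} [NormedAddCommGroup E] [InnerProductSpace ℝ E]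

lemma norm_halfTurn {u v : E} (hu : ‖u‖ = 1) (hv : ‖v‖ = 1) (huv : ⟪u, v⟫ = 0) (t : ℝ) :
    ‖halfTurn u v t‖ = 1 := by
  have hsq : ‖halfTurn u v t‖ ^ 2 = 1 := by
    rw [halfTurn, norm_add_sq_real, norm_smul, norm_smul, hu, hv, real_inner_smul_left,
      real_inner_smul_right, huv]
    simp
  exact (pow_eq_one_iff_of_nonneg (norm_nonneg _) two_ne_zero).1 hsq

lemma integral_orderSign_mul_inner_halfTurn [CompleteSpace E] {u v : E} (hu : ‖u‖ = 1)
    (hv : ‖v‖ = 1) (huv : ⟪u, v⟫ = 0) :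
    ∫ x, ∫ y, orderSign x y * ⟪halfTurn v (-u) x, halfTurn u v y⟫ ∂μ₀₁ ∂μ₀₁ = 2 / π := by
  have hinner : EqOn (fun x => ⟪halfTurn v (-u) x, orderSignTransform (halfTurn u v) x⟫)
      (fun _ => 2 / π) (Ioo 0 1) := fun x hx => by
    simp [orderSignTransform_halfTurn u v hx, real_inner_smul_right,
      norm_halfTurn hv ((norm_neg u).trans hu) (by simp [real_inner_comm, huv])]
  rw [integral_integral_orderSign_mul_inner _
    (integrable_Ioo_of_continuous (continuous_halfTurn u v) 0 1),
    setIntegral_congr_fun measurableSet_Ioo hinner]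
  simp

end HalfTurn

theorem bell_example1_dim_ge_two_general {E : Type*} [NormedAddCommGroup E]
    [InnerProductSpace ℝ E] [CompleteSpace E] [SecondCountableTopology E] [MeasurableSpace E]
    [BorelSpace E] (hE : 2 ≤ Module.rank ℝ E) :
    IsGreatest
      {I : ℝ | ∃ g h : ℝ → E, Measurable g ∧ Measurable h ∧
        (∀ᵐ x ∂(volume.restrict (Ioo (0 : ℝ) 1)), ‖g x‖ = 1) ∧
        (∀ᵐ y ∂(volume.restrict (Ioo (0 : ℝ) 1)), ‖h y‖ = 1) ∧
        I = ∫ x in Ioo (0 : ℝ) 1, ∫ y in Ioo (0 : ℝ) 1,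
              (if x < y then (1 : ℝ) else -1) * ⟪g x, h y⟫}
      (2 / π) := by
  constructor
  · obtain ⟨v, hv, horth⟩ := exists_orthonormal_of_le_rank (n := 2) hE
    have h01 : ⟪v 0, v 1⟫ = 0 := horth zero_ne_one
    have h10 : ⟪v 1, -v 0⟫ = 0 := by simp [real_inner_comm, h01]
    exact ⟨halfTurn (v 1) (-v 0), halfTurn (v 0) (v 1), (continuous_halfTurn _ _).measurable,
      (continuous_halfTurn _ _).measurable,
      .of_forall (norm_halfTurn (hv 1) ((norm_neg _).trans (hv 0)) h10),
      .of_forall (norm_halfTurn (hv 0) (hv 1) h01),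
      (integral_orderSign_mul_inner_halfTurn (hv 0) (hv 1) h01).symm⟩
  · rintro _ ⟨g, h, hg, hh, hg1, hh1, rfl⟩
    exact integral_orderSign_mul_inner_le_of_norm_eq_one hg.aestronglyMeasurable
      hh.aestronglyMeasurable hg1 hh1

/-- Let `f : (0,1)×(0,1) → ℝ` be `1` if `x < y` and `-1` otherwise, and let `d ≥ 2`.
Then `2/π` is the greatest element of the set of values `∫∫ f(x,y) ⟨g(x), h(y)⟩`
over measurable `g, h : (0,1) → ℝ^d` with `‖g(x)‖ = 1`, `‖h(y)‖ = 1` a.e. -/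
theorem bell_example1_dim_ge_two (d : ℕ) (hd : 2 ≤ d) :
    IsGreatest
      {I : ℝ | ∃ g h : ℝ → EuclideanSpace ℝ (Fin d), Measurable g ∧ Measurable h ∧
        (∀ᵐ x ∂(volume.restrict (Set.Ioo (0:ℝ) 1)), ‖g x‖ = 1) ∧
        (∀ᵐ y ∂(volume.restrict (Set.Ioo (0:ℝ) 1)), ‖h y‖ = 1) ∧
        I = ∫ x in Set.Ioo (0:ℝ) 1, ∫ y in Set.Ioo (0:ℝ) 1,
              (if x < y then (1:ℝ) else -1) * ⟪g x, h y⟫}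
      (2 / Real.pi) :=
  bell_example1_dim_ge_two_general <| by
    rw [← Module.finrank_eq_rank, finrank_euclideanSpace_fin]
    exact_mod_cast hd
end

section
/- Let H be a real inner product space. Then for all measurable functions g, h : (0,1) → H with ‖g(x)‖ = 1 and ‖h(y)‖ = 1 for almost every x, y, one has ∫₀¹∫₀¹ f(x,y) ⟨g(x), h(y)⟩ dx dy ≤ 2/π. -/
open MeasureTheory
open scoped RealInnerProductSpace

/-!
Put `Φ x = ∫ f(x, y) h(y) dy`. Since `‖g‖ = 1`, the double integral is at most `∫ ‖Φ‖`. The map `Φ`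
is `2`-Lipschitz and `Φ 1 = -Φ 0`, so it extends to an antiperiodic `2`-Lipschitz map on the line.
The translates of this extension form a `2`-Lipschitz path in `L²(0, 1)` which stays on the sphere
of radius `‖Φ‖₂` and joins `Φ` to `-Φ` in unit time. A path on a sphere joining antipodal points is
at least as long as a half great circle, so `π ‖Φ‖₂ ≤ 2`, and `∫ ‖Φ‖ ≤ ‖Φ‖₂`.
-/

open Filter Function InnerProductGeometry Set TopologicalSpace Topology
open scoped ENNReal NNReal Real

section SphericalPaths

variable {V : Type*} [NormedAddCommGroup V] [InnerProductSpace ℝ V]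

theorem angle_le_sum_angle {v : ℕ → V} (hv : v 0 ≠ 0) (n : ℕ) :
    angle (v 0) (v n) ≤ ∑ j ∈ Finset.range n, angle (v j) (v (j + 1)) := by
  induction n with
  | zero => simp [angle_self hv]
  | succ n ih =>
    rw [Finset.sum_range_succ]
    linarith [angle_le_angle_add_angle (v 0) (v n) (v (n + 1))]

theorem norm_sub_eq_two_mul_norm_mul_sin_half_angle {x y : V} (h : ‖x‖ = ‖y‖) :
    ‖x - y‖ = 2 * ‖x‖ * Real.sin (angle x y / 2) := by
  have hsin : 0 ≤ Real.sin (angle x y / 2) :=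
    Real.sin_nonneg_of_nonneg_of_le_pi (by linarith [angle_nonneg x y])
      (by linarith [angle_nonneg x y, angle_le_pi x y])
  refine (sq_eq_sq₀ (norm_nonneg _) (by positivity)).1 ?_
  rw [norm_sub_sq_real, ← cos_angle_mul_norm_mul_norm, ← h, mul_pow, Real.sin_sq_eq_half_sub,
    mul_div_cancel₀ _ two_ne_zero]
  ring

theorem two_mul_norm_mul_sin_le_of_norm_sub_le {v : ℕ → V} {n : ℕ} {δ : ℝ} (hn : 0 < n)
    (hnorm : ∀ j ≤ n, ‖v j‖ = ‖v 0‖) (hneg : v n = -v 0)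
    (hstep : ∀ j < n, ‖v (j + 1) - v j‖ ≤ δ) :
    2 * ‖v 0‖ * Real.sin (π / n / 2) ≤ δ := by
  rcases eq_or_ne (v 0) 0 with h0 | h0
  · simpa [h0] using (norm_nonneg _).trans (hstep 0 hn)
  obtain ⟨j, hj, hangle⟩ : ∃ j ∈ Finset.range n, π / n ≤ angle (v j) (v (j + 1)) := by
    refine Finset.exists_le_of_sum_le (Finset.nonempty_range_iff.2 hn.ne') ?_
    calc ∑ _j ∈ Finset.range n, π / n = π := by simp [field]
      _ = angle (v 0) (v n) := by rw [hneg, angle_self_neg_of_nonzero h0]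
      _ ≤ _ := angle_le_sum_angle h0 n
  rw [Finset.mem_range] at hj
  have hsin : Real.sin (π / n / 2) ≤ Real.sin (angle (v j) (v (j + 1)) / 2) :=
    Real.sin_le_sin_of_le_of_le_pi_div_two
      (by linarith [Real.pi_pos, show 0 ≤ π / n by positivity])
      (by linarith [angle_le_pi (v j) (v (j + 1))]) (by linarith)
  calc 2 * ‖v 0‖ * Real.sin (π / n / 2)
      ≤ 2 * ‖v j‖ * Real.sin (angle (v j) (v (j + 1)) / 2) := by
        rw [hnorm j hj.le]
        gcongr
    _ = ‖v j - v (j + 1)‖ := by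
        rw [norm_sub_eq_two_mul_norm_mul_sin_half_angle ((hnorm j hj.le).trans (hnorm _ hj).symm)]
    _ ≤ δ := norm_sub_rev (v j) _ ▸ hstep j hj

theorem two_mul_norm_mul_sin_le_of_lipschitzOnWith {w : ℝ → V} {a b : ℝ} {C : ℝ≥0} {n : ℕ}
    (hn : 0 < n) (hab : a ≤ b) (hw : LipschitzOnWith C w (Icc a b))
    (hnorm : ∀ t ∈ Icc a b, ‖w t‖ = ‖w a‖) (hneg : w b = -w a) :
    2 * ‖w a‖ * Real.sin (π / n / 2) ≤ C * ((b - a) / n) := by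
  have hgap : 0 ≤ (b - a) / n := div_nonneg (sub_nonneg.2 hab) n.cast_nonneg
  let t : ℕ → ℝ := fun j => a + j * ((b - a) / n)
  have ht0 : t 0 = a := by simp [t]
  have htn : t n = b := by
    simp only [t]
    field_simp
    ring
  have hmono : Monotone t := fun i j hij => by
    simp only [t]
    gcongr
  have hmem : ∀ j ≤ n, t j ∈ Icc a b := fun j hj => ⟨ht0 ▸ hmono j.zero_le, htn ▸ hmono hj⟩
  have hstep : ∀ j < n, ‖w (t (j + 1)) - w (t j)‖ ≤ C * ((b - a) / n) := fun j hj => by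
    have hsub : t (j + 1) - t j = (b - a) / n := by
      simp only [t]
      push_cast
      ring
    simpa only [hsub, Real.norm_of_nonneg hgap] using hw.norm_sub_le (hmem _ hj) (hmem j hj.le)
  simpa only [ht0] using two_mul_norm_mul_sin_le_of_norm_sub_le (v := fun j => w (t j)) hn
    (fun j hj => by rw [hnorm _ (hmem j hj), ht0]) (by rw [htn, ht0, hneg]) hstep

theorem pi_mul_norm_le_of_lipschitzOnWith_of_eq_neg {w : ℝ → V} {a b : ℝ} {C : ℝ≥0} (hab : a ≤ b)
    (hw : LipschitzOnWith C w (Icc a b)) (hnorm : ∀ t ∈ Icc a b, ‖w t‖ = ‖w a‖)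
    (hneg : w b = -w a) : π * ‖w a‖ ≤ C * (b - a) := by
  have hpolygon : ∀ n : ℕ, 0 < n → π * ‖w a‖ * Real.sinc (π / n / 2) ≤ C * (b - a) := by
    intro n hn
    calc π * ‖w a‖ * Real.sinc (π / n / 2)
        = n * (2 * ‖w a‖ * Real.sin (π / n / 2)) := by
          rw [Real.sinc_of_ne_zero (by positivity)]
          field_simp
      _ ≤ n * (C * ((b - a) / n)) := mul_le_mul_of_nonneg_left
          (two_mul_norm_mul_sin_le_of_lipschitzOnWith hn hab hw hnorm hneg) n.cast_nonneg
      _ = C * (b - a) := by field_simp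
  have hlim : Tendsto (fun n : ℕ => π * ‖w a‖ * Real.sinc (π / n / 2)) atTop
      (𝓝 (π * ‖w a‖ * Real.sinc (0 / 2))) :=
    ((Real.continuous_sinc.tendsto _).comp
      ((tendsto_const_div_atTop_nhds_zero_nat π).div_const 2)).const_mul _
  simpa using le_of_tendsto hlim (eventually_atTop.2 ⟨1, hpolygon⟩)

end SphericalPaths

section Antiperiodic

theorem lipschitzWith_of_dist_le_of_dist_le {X : Type*} [PseudoMetricSpace X] {f : ℝ → X}
    {C : ℝ≥0} {δ : ℝ} (hδ : 0 < δ)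
    (hf : ∀ x t, 0 ≤ t → t ≤ δ → dist (f x) (f (x + t)) ≤ C * t) : LipschitzWith C f := by
  have hle : ∀ x t, 0 ≤ t → dist (f x) (f (x + t)) ≤ C * t := by
    intro x t ht
    obtain ⟨n, hn⟩ := exists_nat_gt (t / δ)
    have hn0 : (0 : ℝ) < n := (by positivity : 0 ≤ t / δ).trans_lt hn
    have hstep : t / n ≤ δ := by
      rw [div_lt_iff₀ hδ] at hn
      exact (div_le_iff₀' hn0).2 hn.le
    have := dist_le_range_sum_of_dist_le (f := fun j : ℕ => f (x + j * (t / n))) n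
      (d := fun _ => C * (t / n)) fun {j} _ => by
        simpa [add_mul, add_assoc] using hf (x + j * (t / n)) (t / n) (by positivity) hstep
    simpa [mul_div_cancel₀, hn0.ne', mul_left_comm] using this
  refine .of_dist_le_mul fun x y => ?_
  wlog hxy : x ≤ y generalizing x y
  · rw [dist_comm, dist_comm x]
    exact this y x (le_of_not_ge hxy)
  · simpa [dist_comm x, Real.dist_eq, abs_of_nonneg (sub_nonneg.2 hxy)] using
      hle x (y - x) (sub_nonneg.2 hxy)

variable {E : Type*} {T : ℝ}

theorem exists_antiperiodic_eqOn_Icc [AddCommGroup E] {f : ℝ → E} (hT : 0 < T)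
    (hneg : f T = -f 0) : ∃ F : ℝ → E, Antiperiodic F T ∧ EqOn F f (Icc 0 T) := by
  let F : ℝ → E := fun x => (toIcoDiv hT 0 x).negOnePow • f (toIcoMod hT 0 x)
  have hF : Antiperiodic F T := fun x => by
    simp [F, toIcoDiv_add_right, toIcoMod_add_right, Int.negOnePow_succ]
  have hIco : ∀ x ∈ Ico 0 T, F x = f x := fun x hx => by
    have hdiv : toIcoDiv hT 0 x = 0 := toIcoDiv_eq_of_sub_zsmul_mem_Ico hT (by simpa using hx)
    have hmod : toIcoMod hT 0 x = x := (toIcoMod_eq_self hT).2 (by simpa using hx)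
    simp [F, hdiv, hmod]
  refine ⟨F, hF, fun x hx => ?_⟩
  rcases hx.2.lt_or_eq with h | rfl
  · exact hIco x ⟨hx.1, h⟩
  · rw [hneg, ← hIco 0 ⟨le_rfl, hT⟩, ← hF, zero_add]

theorem lipschitzWith_of_antiperiodic [SeminormedAddCommGroup E] {F : ℝ → E} {C : ℝ≥0}
    (hT : 0 < T) (hF : Antiperiodic F T) (hlip : LipschitzOnWith C F (Icc 0 T)) :
    LipschitzWith C F := by
  refine lipschitzWith_of_dist_le_of_dist_le hT fun x t ht htT => ?_
  have hper : Periodic (fun x => dist (F x) (F (x + t))) T := fun x => by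
    simp only [add_right_comm x T t, hF x, hF (x + t), dist_neg_neg]
  obtain ⟨y, hy, hxy⟩ := hper.exists_mem_Ico₀ hT x
  rw [hxy]
  have h0 : (0 : ℝ) ∈ Icc 0 T := ⟨le_rfl, hT.le⟩
  have hTmem : T ∈ Icc 0 T := ⟨hT.le, le_rfl⟩
  have hymem : y ∈ Icc 0 T := Ico_subset_Icc_self hy
  rcases le_total (y + t) T with h | h
  · simpa [Real.dist_eq, abs_of_nonneg ht] using
      hlip.dist_le_mul y hymem (y + t) ⟨by linarith [hy.1], h⟩
  have hzmem : y + t - T ∈ Icc 0 T := ⟨by linarith, by linarith [hy.2]⟩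
  have hwrap : dist (F T) (F (y + t)) = dist (F 0) (F (y + t - T)) := by
    rw [← dist_neg_neg (F 0), ← hF 0, ← hF (y + t - T), zero_add, sub_add_cancel]
  calc dist (F y) (F (y + t)) ≤ dist (F y) (F T) + dist (F T) (F (y + t)) := dist_triangle _ _ _
    _ ≤ C * dist y T + C * dist 0 (y + t - T) := by
        rw [hwrap]
        exact add_le_add (hlip.dist_le_mul y hymem T hTmem) (hlip.dist_le_mul 0 h0 _ hzmem)
    _ = C * t := by
        rw [dist_comm y, Real.dist_eq, abs_of_nonneg (sub_nonneg.2 hy.2.le), dist_comm,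
          Real.dist_eq, sub_zero, abs_of_nonneg hzmem.1]
        ring

end Antiperiodic

section AntipodalEnds

theorem memLp_restrict_of_continuousOn {α : Type*} [TopologicalSpace α] [MeasurableSpace α]
    [OpensMeasurableSpace α] [PseudoMetrizableSpace α] {E : Type*} [NormedAddCommGroup E]
    {μ : Measure α} [IsFiniteMeasureOnCompacts μ] {f : α → E} {K : Set α} (hK : IsCompact K)
    (hKm : MeasurableSet K) (hf : ContinuousOn f K) (p : ℝ≥0∞) : MemLp f p (μ.restrict K) := by
  obtain ⟨M, hM⟩ := hK.exists_bound_of_continuousOn hf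
  have : IsFiniteMeasure (μ.restrict K) := ⟨by simpa using hK.measure_lt_top⟩
  exact .of_bound (hf.aestronglyMeasurable_of_isCompact hK hKm) M
    (ae_restrict_of_forall_mem hKm hM)

variable {E : Type*} [NormedAddCommGroup E] [InnerProductSpace ℝ E]

theorem sq_norm_toLp_eq_integral_sq_norm {α : Type*} [MeasurableSpace α] {μ : Measure α}
    {f : α → E} (hf : MemLp f 2 μ) : ‖hf.toLp f‖ ^ 2 = ∫ x, ‖f x‖ ^ 2 ∂μ := by
  rw [← real_inner_self_eq_norm_sq, L2.inner_def]
  exact integral_congr_ae (hf.coeFn_toLp.mono fun x hx => by simp [hx])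

theorem lipschitzWith_toLp_translate {F : ℝ → E} {C : ℝ≥0} {T : ℝ} (hF : LipschitzWith C F)
    (hmem : ∀ t, MemLp (fun x => F (x + t)) 2 (volume.restrict (Ioc 0 T))) :
    LipschitzWith (NNReal.sqrt T.toNNReal * C) fun t => (hmem t).toLp _ :=
  .of_dist_le_mul fun s t => by
    refine le_of_sq_le_sq ?_ (by positivity)
    rw [dist_eq_norm, ← MemLp.toLp_sub, sq_norm_toLp_eq_integral_sq_norm]
    calc ∫ x in Ioc 0 T, ‖F (x + s) - F (x + t)‖ ^ 2
        ≤ ∫ _ in Ioc 0 T, (C * dist s t) ^ 2 := by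
          refine integral_mono_of_nonneg (.of_forall fun _ => by positivity)
            (integrable_const _) (.of_forall fun x => pow_le_pow_left₀ (norm_nonneg _) ?_ 2)
          simpa [dist_eq_norm] using hF.dist_le_mul (x + s) (x + t)
      _ = (↑(NNReal.sqrt T.toNNReal * C) * dist s t) ^ 2 := by
          simp [mul_pow, mul_assoc, Measure.real, ENNReal.toReal_ofReal']

theorem integral_sq_norm_le_of_antiperiodic {F : ℝ → E} {C : ℝ≥0} {T : ℝ} (hT : 0 < T)
    (hF : Antiperiodic F T) (hlip : LipschitzWith C F) :
    ∫ x in (0 : ℝ)..T, ‖F x‖ ^ 2 ≤ T * (C * T / π) ^ 2 := by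
  have hmem : ∀ t, MemLp (fun x => F (x + t)) 2 (volume.restrict (Ioc 0 T)) := fun t =>
    (memLp_restrict_of_continuousOn isCompact_Icc measurableSet_Icc
      (hlip.continuous.comp (continuous_add_const t)).continuousOn 2).mono_measure
      (Measure.restrict_mono Ioc_subset_Icc_self le_rfl)
  let w : ℝ → Lp E 2 (volume.restrict (Ioc 0 T)) := fun t => (hmem t).toLp _
  have hsq : ∀ t, ‖w t‖ ^ 2 = ∫ x in (0 : ℝ)..T, ‖F x‖ ^ 2 := fun t => by
    have hper : Periodic (fun x => ‖F x‖ ^ 2) T := fun x => by simp [hF x]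
    rw [sq_norm_toLp_eq_integral_sq_norm, ← intervalIntegral.integral_of_le hT.le,
      intervalIntegral.integral_comp_add_right (fun x => ‖F x‖ ^ 2), zero_add, add_comm T,
      hper.intervalIntegral_add_eq t 0, zero_add]
  have hnorm : ∀ t, ‖w t‖ = ‖w 0‖ := fun t =>
    (sq_eq_sq₀ (norm_nonneg _) (norm_nonneg _)).1 ((hsq t).trans (hsq 0).symm)
  have hneg : w T = -w 0 := by
    rw [← MemLp.toLp_neg]
    exact MemLp.toLp_congr _ _ (.of_forall fun x => by simp [hF x])
  have hpath : π * ‖w 0‖ ≤ √T * C * T := by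
    simpa only [NNReal.coe_mul, Real.coe_sqrt, Real.coe_toNNReal _ hT.le, sub_zero] using
      pi_mul_norm_le_of_lipschitzOnWith_of_eq_neg (w := w) hT.le
        (lipschitzWith_toLp_translate hlip hmem).lipschitzOnWith (fun t _ => hnorm t) hneg
  calc ∫ x in (0 : ℝ)..T, ‖F x‖ ^ 2 = ‖w 0‖ ^ 2 := (hsq 0).symm
    _ ≤ (√T * C * T / π) ^ 2 := by
        gcongr
        rwa [le_div_iff₀' Real.pi_pos]
    _ = T * (C * T / π) ^ 2 := by
        rw [mul_assoc, mul_div_assoc, mul_pow, Real.sq_sqrt hT.le]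

theorem integral_sq_norm_le_of_lipschitzOnWith_of_eq_neg {f : ℝ → E} {C : ℝ≥0} {T : ℝ}
    (hT : 0 < T) (hf : LipschitzOnWith C f (Icc 0 T)) (hneg : f T = -f 0) :
    ∫ x in (0 : ℝ)..T, ‖f x‖ ^ 2 ≤ T * (C * T / π) ^ 2 := by
  obtain ⟨F, hF, hFf⟩ := exists_antiperiodic_eqOn_Icc hT hneg
  have hlip : LipschitzOnWith C F (Icc 0 T) := fun x hx y hy => by
    rw [hFf hx, hFf hy]
    exact hf hx hy
  refine (intervalIntegral.integral_congr fun x hx => ?_).trans_le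
    (integral_sq_norm_le_of_antiperiodic hT hF (lipschitzWith_of_antiperiodic hT hF hlip))
  rw [hFf (uIcc_of_le hT.le ▸ hx)]

theorem integral_norm_le_of_lipschitzOnWith_of_eq_neg {f : ℝ → E} {C : ℝ≥0} {T : ℝ} (hT : 0 < T)
    (hf : LipschitzOnWith C f (Icc 0 T)) (hneg : f T = -f 0) :
    ∫ x in (0 : ℝ)..T, ‖f x‖ ≤ C * T ^ 2 / π := by
  have hcont : ContinuousOn (fun x => ‖f x‖) (Icc 0 T) := hf.continuousOn.norm
  have hjensen := (convexOn_pow 2).map_set_average_le (continuous_pow 2).continuousOn isClosed_Ici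
    (μ := volume) (t := Icc 0 T) (by simp [hT]) (by simp) (.of_forall fun x => norm_nonneg (f x))
    hcont.integrableOn_Icc (hcont.pow 2).integrableOn_Icc
  simp only [setAverage_eq, Real.volume_real_Icc_of_le hT.le, sub_zero, smul_eq_mul,
    integral_Icc_eq_integral_Ioc, ← intervalIntegral.integral_of_le hT.le] at hjensen
  have hmean : T⁻¹ * ∫ x in (0 : ℝ)..T, ‖f x‖ ≤ C * T / π := by
    refine le_of_sq_le_sq (hjensen.trans ?_) (by positivity)
    rw [inv_mul_le_iff₀ hT]
    exact integral_sq_norm_le_of_lipschitzOnWith_of_eq_neg hT hf hneg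
  calc ∫ x in (0 : ℝ)..T, ‖f x‖ ≤ T * (C * T / π) := (inv_mul_le_iff₀ hT).1 hmean
    _ = C * T ^ 2 / π := by ring

end AntipodalEnds

section SignKernel

theorem integral_ite_lt_mul {φ : ℝ → ℝ} {a b x : ℝ} (hφ : IntervalIntegrable φ volume a b)
    (hx : x ∈ Icc a b) :
    ∫ y in Ioo a b, (if x < y then (1 : ℝ) else -1) * φ y =
      (∫ y in a..b, φ y) - 2 * ∫ y in a..x, φ y := by
  have hxu : x ∈ uIcc a b := uIcc_of_le (hx.1.trans hx.2) ▸ hx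
  have hleft : EqOn (fun y => (if x < y then (1 : ℝ) else -1) * φ y) (fun y => -φ y) (Ioc a x) :=
    fun y hy => by simp [hy.2.not_gt]
  have hright : EqOn (fun y => (if x < y then (1 : ℝ) else -1) * φ y) φ (Ioc x b) :=
    fun y hy => by simp [hy.1]
  have hφl : IntervalIntegrable φ volume a x := hφ.mono_set (uIcc_subset_uIcc_left hxu)
  have hφr : IntervalIntegrable φ volume x b := hφ.mono_set (uIcc_subset_uIcc_right hxu)
  rw [← integral_Ioc_eq_integral_Ioo, ← Ioc_union_Ioc_eq_Ioc hx.1 hx.2,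
    setIntegral_union (Ioc_disjoint_Ioc_of_le le_rfl) measurableSet_Ioc
      (hφl.1.neg.congr_fun hleft.symm measurableSet_Ioc)
      (hφr.1.congr_fun hright.symm measurableSet_Ioc),
    setIntegral_congr_fun measurableSet_Ioc hleft, setIntegral_congr_fun measurableSet_Ioc hright,
    integral_neg, ← intervalIntegral.integral_of_le hx.1, ← intervalIntegral.integral_of_le hx.2,
    ← intervalIntegral.integral_add_adjacent_intervals hφl hφr]
  ring

variable {E : Type*} [NormedAddCommGroup E] [InnerProductSpace ℝ E]

theorem measurable_inner_of_continuous {α : Type*} [TopologicalSpace α] [MetrizableSpace α]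
    [SecondCountableTopology α] [MeasurableSpace α] [OpensMeasurableSpace α] {f g : α → E}
    (hf : Continuous f) (hg : ∀ v, Measurable fun x => ⟪v, g x⟫) :
    Measurable fun x => ⟪f x, g x⟫ :=
  (measurable_uncurry_of_continuous_of_measurable (u := fun t x => ⟪f t, g x⟫)
    (fun _ => hf.inner continuous_const) fun t => hg (f t)).comp
    (measurable_id.prodMk measurable_id)

theorem intervalIntegrable_inner_of_norm_le {μ : Measure ℝ} [IsLocallyFiniteMeasure μ] {k : ℝ → E}
    {v : E} {C : ℝ} (hk : AEStronglyMeasurable (fun y => ⟪k y, v⟫) μ) (hC : ∀ᵐ y ∂μ, ‖k y‖ ≤ C)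
    (a b : ℝ) : IntervalIntegrable (fun y => ⟪k y, v⟫) μ a b :=
  (intervalIntegrable_const (c := C * ‖v‖)).mono_fun' hk.restrict <| ae_restrict_of_ae <|
    hC.mono fun y hy =>
      (norm_inner_le_norm (k y) v).trans (mul_le_mul_of_nonneg_right hy (norm_nonneg v))

variable [CompleteSpace E]

/- `E` need not be separable, so `k` may fail to be Bochner integrable; its primitive is obtained
weakly, from the Riesz representation theorem. -/
theorem exists_lipschitzWith_inner_eq_intervalIntegral {k : ℝ → E} {C : ℝ≥0}
    (hk : ∀ v, AEStronglyMeasurable fun y => ⟪k y, v⟫) (hC : ∀ᵐ y, ‖k y‖ ≤ C) (a : ℝ) :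
    ∃ K : ℝ → E, LipschitzWith C K ∧ ∀ x v, ⟪K x, v⟫ = ∫ y in a..x, ⟪k y, v⟫ := by
  have hint : ∀ v s t, IntervalIntegrable (fun y => ⟪k y, v⟫) volume s t := fun v =>
    intervalIntegrable_inner_of_norm_le (hk v) hC
  have hnorm : ∀ v s t, ‖∫ y in s..t, ⟪k y, v⟫‖ ≤ C * |t - s| * ‖v‖ := fun v s t =>
    (intervalIntegral.norm_integral_le_of_norm_le_const_ae (C := C * ‖v‖)
      (hC.mono fun y hy _ => (norm_inner_le_norm (k y) v).trans (by gcongr))).trans_eq (by ring)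
  let L : ℝ → E →ₗ[ℝ] ℝ := fun x =>
    { toFun := fun v => ∫ y in a..x, ⟪k y, v⟫
      map_add' := fun v w => by
        simp only [inner_add_right, intervalIntegral.integral_add (hint v a x) (hint w a x)]
      map_smul' := fun c v => by simp [inner_smul_right] }
  let K : ℝ → E := fun x =>
    (InnerProductSpace.toDual ℝ E).symm ((L x).mkContinuous _ fun v => hnorm v a x)
  have hK : ∀ x v, ⟪K x, v⟫ = ∫ y in a..x, ⟪k y, v⟫ := fun x v =>
    InnerProductSpace.toDual_symm_apply
  refine ⟨K, .of_dist_le_mul fun s t => ?_, hK⟩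
  rw [dist_comm, dist_eq_norm, ← innerSL_apply_norm ℝ, dist_comm, Real.dist_eq]
  refine ContinuousLinearMap.opNorm_le_bound _ (by positivity) fun v => ?_
  rw [innerSL_apply_apply, inner_sub_left, hK, hK,
    intervalIntegral.integral_interval_sub_left (hint v a t) (hint v a s)]
  simpa [abs_sub_comm] using hnorm v s t

theorem exists_lipschitzWith_inner_eq_integral_ite_lt_mul {k : ℝ → E} {C : ℝ≥0} {a b : ℝ}
    (hk : ∀ v, AEStronglyMeasurable (fun y => ⟪k y, v⟫) (volume.restrict (Ioo a b)))
    (hC : ∀ᵐ y ∂volume.restrict (Ioo a b), ‖k y‖ ≤ C) :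
    ∃ Φ : ℝ → E, LipschitzWith (2 * C) Φ ∧ Φ b = -Φ a ∧ ∀ x ∈ Icc a b, ∀ v,
      ⟪Φ x, v⟫ = ∫ y in Ioo a b, (if x < y then (1 : ℝ) else -1) * ⟪k y, v⟫ := by
  let k₀ : ℝ → E := (Ioo a b).indicator k
  have hinner : ∀ v, (fun y => ⟪k₀ y, v⟫) = (Ioo a b).indicator fun y => ⟪k y, v⟫ := fun v => by
    ext y
    by_cases hy : y ∈ Ioo a b <;> simp [k₀, hy]
  have hk₀ : ∀ v, AEStronglyMeasurable fun y => ⟪k₀ y, v⟫ := fun v => by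
    rw [hinner]
    exact (aestronglyMeasurable_indicator_iff measurableSet_Ioo).2 (hk v)
  have hC₀ : ∀ᵐ y, ‖k₀ y‖ ≤ C := by
    filter_upwards [(ae_restrict_iff' measurableSet_Ioo).1 hC] with y hy
    by_cases hmem : y ∈ Ioo a b <;> simp [k₀, hmem, hy]
  obtain ⟨K, hlip, hK⟩ := exists_lipschitzWith_inner_eq_intervalIntegral hk₀ hC₀ a
  have hKa : K a = 0 := ext_inner_right ℝ fun v => by simp [hK]
  refine ⟨fun x => K b - (2 : ℝ) • K x, ?_, ?_, fun x hx v => ?_⟩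
  · simpa using (LipschitzWith.const (K b)).sub (lipschitzWith_smul (2 : ℝ) |>.comp hlip)
  · simp [hKa, two_smul]
  · rw [inner_sub_left, real_inner_smul_left, hK, hK, ← integral_ite_lt_mul
      (intervalIntegrable_inner_of_norm_le (hk₀ v) hC₀ a b) hx]
    exact setIntegral_congr_fun measurableSet_Ioo fun y hy => by simp [k₀, hy]

end SignKernel

theorem bell_example1_hilbert_bound_general {H : Type*} [NormedAddCommGroup H]
    [InnerProductSpace ℝ H] [MeasurableSpace H] [OpensMeasurableSpace H]
    {g h : ℝ → H} (hgm : Measurable g) (hhm : Measurable h)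
    (hg1 : ∀ᵐ x ∂(volume.restrict (Ioo (0 : ℝ) 1)), ‖g x‖ ≤ 1)
    (hh1 : ∀ᵐ y ∂(volume.restrict (Ioo (0 : ℝ) 1)), ‖h y‖ ≤ 1) :
    IntegrableOn (fun x => ∫ y in Ioo (0 : ℝ) 1, (if x < y then (1 : ℝ) else -1) * ⟪g x, h y⟫)
        (Ioo 0 1) ∧
      |∫ x in Ioo (0 : ℝ) 1, ∫ y in Ioo (0 : ℝ) 1,
        (if x < y then (1 : ℝ) else -1) * ⟪g x, h y⟫| ≤ 2 / π := by
  have hcoe : Continuous ((↑) : H → UniformSpace.Completion H) :=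
    UniformSpace.Completion.continuous_coe H
  obtain ⟨Φ, hlip, hneg, hΦ⟩ := exists_lipschitzWith_inner_eq_integral_ite_lt_mul (a := 0) (b := 1)
    (k := fun y => (h y : UniformSpace.Completion H)) (C := 1)
    (fun v => ((hcoe.inner continuous_const).measurable.comp hhm).aestronglyMeasurable)
    (by simpa using hh1)
  have heq : EqOn (fun x => ∫ y in Ioo (0 : ℝ) 1, (if x < y then (1 : ℝ) else -1) * ⟪g x, h y⟫)
      (fun x => ⟪Φ x, (g x : UniformSpace.Completion H)⟫) (Ioo 0 1) := fun x hx => by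
    simp only [hΦ x (Ioo_subset_Icc_self hx), UniformSpace.Completion.inner_coe, real_inner_comm]
  have hmeas : Measurable fun x => ⟪Φ x, (g x : UniformSpace.Completion H)⟫ :=
    measurable_inner_of_continuous hlip.continuous fun v =>
      (continuous_const.inner hcoe).measurable.comp hgm
  have hle : ∀ᵐ x ∂volume.restrict (Ioo (0 : ℝ) 1),
      ‖⟪Φ x, (g x : UniformSpace.Completion H)⟫‖ ≤ ‖Φ x‖ := hg1.mono fun x hx =>
    (norm_inner_le_norm _ _).trans (mul_le_of_le_one_right (norm_nonneg _) (by simpa using hx))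
  have hΦint : IntegrableOn (fun x => ‖Φ x‖) (Ioo 0 1) :=
    hlip.continuous.norm.integrableOn_Icc.mono_set Ioo_subset_Icc_self
  have hnorm := integral_norm_le_of_lipschitzOnWith_of_eq_neg one_pos hlip.lipschitzOnWith hneg
  rw [intervalIntegral.integral_of_le zero_le_one, integral_Ioc_eq_integral_Ioo] at hnorm
  refine ⟨IntegrableOn.congr_fun (hΦint.mono' hmeas.aestronglyMeasurable hle) heq.symm
    measurableSet_Ioo, ?_⟩
  rw [setIntegral_congr_fun measurableSet_Ioo heq]
  exact (norm_integral_le_of_norm_le hΦint hle).trans (by simpa using hnorm)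

/-- Let `f : (0,1)×(0,1) → ℝ` be `1` if `x < y` and `-1` otherwise, and let `H` be a real
inner product space. For all measurable `g, h : (0,1) → H` of unit norm a.e.,
`∫∫ f(x,y) ⟨g(x), h(y)⟩ ≤ 2/π`. -/
theorem bell_example1_hilbert_bound (H : Type*) [NormedAddCommGroup H]
    [InnerProductSpace ℝ H] [MeasurableSpace H] [BorelSpace H]
    (g h : ℝ → H) (hgm : Measurable g) (hhm : Measurable h)
    (hg1 : ∀ᵐ x ∂(volume.restrict (Set.Ioo (0:ℝ) 1)), ‖g x‖ = 1)
    (hh1 : ∀ᵐ y ∂(volume.restrict (Set.Ioo (0:ℝ) 1)), ‖h y‖ = 1) :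
    (∫ x in Set.Ioo (0:ℝ) 1, ∫ y in Set.Ioo (0:ℝ) 1,
        (if x < y then (1:ℝ) else -1) * ⟪g x, h y⟫) ≤ 2 / Real.pi :=
  (le_abs_self _).trans (bell_example1_hilbert_bound_general hgm hhm
    (hg1.mono fun _ => le_of_eq) (hh1.mono fun _ => le_of_eq)).2
end

section
/- Let H be a real inner product space. Then for all measurable functions g, h : 𝕋 → H with ‖g(x)‖ = 1 and ‖h(y)‖ = 1 for almost every x, y, one has ∬_{𝕋×𝕋} f(x,y) ⟨g(x), h(y)⟩ dx dy ≤ 2/π. -/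
open MeasureTheory
open scoped RealInnerProductSpace

/-! Regard `h` as a function `φ` with values in the dual of `H` and put `Φ(x) = ∫ k(x - y) φ(y) dy`,
where `k` is the `±1` kernel with `f(x, y) = k(x - y)`. The double integral is then at most
`∫ ‖Φ(x)‖ dx`, so it suffices to show that convolution with `k` has norm `sup |k̂(n)| ≤ 2/π` on
vector-valued `L²`. Applied to a fixed vector this is Parseval; summing over an orthonormal basis
gives it for finite-dimensional `H`. The general case reduces to that one, since translation is
continuous in `L¹`: hence `Φ` is norm continuous with compact range, and up to `ε` all the norms
`‖Φ(x)‖` are attained on one finite-dimensional subspace. The integral defining `Φ` has to be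
weak-*, because a weakly measurable `h` need not be essentially separably valued.
-/

open AddCircle ContinuousLinearMap
open scoped Convolution ENNReal NNReal

section GelfandIntegral

variable {α E : Type*} [MeasurableSpace α] {μ : Measure α} [NormedAddCommGroup E]
  [NormedSpace ℝ E] {φ : α → StrongDual ℝ E} {C : ℝ≥0}

theorem ae_norm_apply_le (hb : ∀ᵐ y ∂μ, ‖φ y‖ ≤ C) (v : E) : ∀ᵐ y ∂μ, ‖φ y v‖ ≤ C * ‖v‖ :=
  hb.mono fun y hy => (φ y).le_of_opNorm_le hy v

theorem memLp_apply [IsFiniteMeasure μ] (p : ℝ≥0∞)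
    (hm : ∀ v, AEStronglyMeasurable (fun y => φ y v) μ) (hb : ∀ᵐ y ∂μ, ‖φ y‖ ≤ C) (v : E) :
    MemLp (fun y => φ y v) p μ :=
  .of_bound (hm v) _ (ae_norm_apply_le hb v)

theorem memLp_top_apply (hm : ∀ v, AEStronglyMeasurable (fun y => φ y v) μ)
    (hb : ∀ᵐ y ∂μ, ‖φ y‖ ≤ C) (v : E) : MemLp (fun y => φ y v) ∞ μ :=
  memLp_top_of_bound (hm v) _ (ae_norm_apply_le hb v)

/-- The operator `v ↦ φ(·)(v)` into `L^∞` that encodes a bounded weak-* measurable function `φ` with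
values in the dual of `E`. -/
noncomputable def applyTop (hm : ∀ v, AEStronglyMeasurable (fun y => φ y v) μ)
    (hb : ∀ᵐ y ∂μ, ‖φ y‖ ≤ C) : E →L[ℝ] Lp ℝ ∞ μ :=
  LinearMap.mkContinuous
    { toFun := fun v => (memLp_top_apply hm hb v).toLp
      map_add' := fun u v => by
        simp only [map_add]
        exact MemLp.toLp_add (memLp_top_apply hm hb u) (memLp_top_apply hm hb v)
      map_smul' := fun c v => by
        simp only [map_smul]
        exact MemLp.toLp_const_smul c (memLp_top_apply hm hb v) }
    C fun v => by
      refine (Lp.norm_toLp _ (memLp_top_apply hm hb v)).trans_le ?_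
      refine ENNReal.toReal_le_of_le_ofReal (by positivity) ?_
      simpa using eLpNorm_le_of_ae_bound (p := ∞) (ae_norm_apply_le hb v)

/-- The Gelfand (weak-*) integral `w ↦ ∫ w(y) φ(y) dμ(y)` of a bounded weak-* measurable function
`φ` against integrable weights. Unlike the Bochner integral it does not ask `φ` to have an
essentially separable range. -/
noncomputable def gelfandIntegral (hm : ∀ v, AEStronglyMeasurable (fun y => φ y v) μ)
    (hb : ∀ᵐ y ∂μ, ‖φ y‖ ≤ C) : Lp ℝ 1 μ →L[ℝ] StrongDual ℝ E :=
  (applyTop hm hb).precomp ℝ ∘L (mul ℝ ℝ).lpPairing μ 1 ∞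

theorem gelfandIntegral_toL1_apply (hm : ∀ v, AEStronglyMeasurable (fun y => φ y v) μ)
    (hb : ∀ᵐ y ∂μ, ‖φ y‖ ≤ C) {w : α → ℝ} (hw : Integrable w μ) (v : E) :
    gelfandIntegral hm hb hw.toL1 v = ∫ y, w y * φ y v ∂μ := by
  refine (lpPairing_eq_integral (mul ℝ ℝ) hw.toL1 (memLp_top_apply hm hb v).toLp).trans ?_
  refine integral_congr_ae ?_
  filter_upwards [hw.coeFn_toL1, (memLp_top_apply hm hb v).coeFn_toLp] with y hwy hφy
  rw [hwy, hφy, mul_apply']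

end GelfandIntegral

section GelfandConvolution

variable {G E : Type*} [AddCommGroup G] [TopologicalSpace G] [IsTopologicalAddGroup G]
  [MeasurableSpace G] [BorelSpace G] {μ : Measure G} [μ.IsAddLeftInvariant] [μ.IsNegInvariant]
  [NormedAddCommGroup E]

theorem continuous_toL1_comp_sub_left [IsLocallyFiniteMeasure μ] [μ.InnerRegularCompactLTTop]
    {k : G → E} (hk : Integrable k μ) : Continuous fun x => (hk.comp_sub_left x).toL1 :=
  (continuous_const (y := hk.toL1)).compMeasurePreservingLp
    (ContinuousMap.mk (fun p : G × G => p.1 - p.2) continuous_sub).curry.continuous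
    (Measure.measurePreserving_sub_left μ) ENNReal.one_ne_top

variable [NormedSpace ℝ E] {k : G → ℝ} {φ : G → StrongDual ℝ E} {C : ℝ≥0}

/-- The convolution `x ↦ ∫ k(x - y) φ(y) dμ(y)` of an integrable kernel with a bounded weak-*
measurable function, as a Gelfand integral. -/
noncomputable def gelfandConvolution (hk : Integrable k μ)
    (hm : ∀ v, AEStronglyMeasurable (fun y => φ y v) μ) (hb : ∀ᵐ y ∂μ, ‖φ y‖ ≤ C) (x : G) :
    StrongDual ℝ E :=
  gelfandIntegral hm hb (hk.comp_sub_left x).toL1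

theorem gelfandConvolution_apply (hk : Integrable k μ)
    (hm : ∀ v, AEStronglyMeasurable (fun y => φ y v) μ) (hb : ∀ᵐ y ∂μ, ‖φ y‖ ≤ C) (x : G) (v : E) :
    gelfandConvolution hk hm hb x v = ∫ y, k (x - y) * φ y v ∂μ :=
  gelfandIntegral_toL1_apply hm hb _ v

theorem continuous_gelfandConvolution [IsLocallyFiniteMeasure μ] [μ.InnerRegularCompactLTTop]
    (hk : Integrable k μ) (hm : ∀ v, AEStronglyMeasurable (fun y => φ y v) μ)
    (hb : ∀ᵐ y ∂μ, ‖φ y‖ ≤ C) : Continuous (gelfandConvolution hk hm hb) :=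
  (gelfandIntegral hm hb).continuous.comp (continuous_toL1_comp_sub_left hk)

end GelfandConvolution

section Dual

theorem exists_finiteDimensional_norm_le_norm_domRestrict_add {E : Type*} [NormedAddCommGroup E]
    [NormedSpace ℝ E] {K : Set (StrongDual ℝ E)} (hK : TotallyBounded K) {ε : ℝ} (hε : 0 < ε) :
    ∃ F : Submodule ℝ E, FiniteDimensional ℝ F ∧ ∀ L ∈ K, ‖L‖ ≤ ‖L.domRestrict F‖ + ε := by
  obtain ⟨t, ht, hKt⟩ := Metric.totallyBounded_iff.1 hK (ε / 3) (by positivity)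
  choose v hv hLv using fun L : StrongDual ℝ E =>
    L.exists_lt_apply_of_lt_opNorm (sub_lt_self ‖L‖ (by positivity : 0 < ε / 3))
  refine ⟨Submodule.span ℝ (v '' t), .span_of_finite ℝ (ht.image v), fun L hL => ?_⟩
  obtain ⟨N, hN, hLN⟩ := Set.mem_iUnion₂.1 (hKt hL)
  rw [Metric.mem_ball, dist_eq_norm] at hLN
  have hnorm : ‖L‖ ≤ ‖N‖ + ‖L - N‖ := norm_le_norm_add_norm_sub' L N
  have happly : ‖N (v N)‖ ≤ ‖L (v N)‖ + ‖L - N‖ :=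
    calc ‖N (v N)‖ ≤ ‖L (v N)‖ + ‖L (v N) - N (v N)‖ := norm_le_norm_add_norm_sub _ _
      _ ≤ ‖L (v N)‖ + ‖L - N‖ := by grw [← (L - N).unit_le_opNorm (v N) (hv N).le, sub_apply]
  have hrestrict : ‖L (v N)‖ ≤ ‖L.domRestrict (Submodule.span ℝ (v '' t))‖ :=
    (L.domRestrict _).unit_le_opNorm
      ⟨v N, Submodule.subset_span (Set.mem_image_of_mem v hN)⟩ (hv N).le
  linarith [hLv N]

variable {X Y H : Type*} [MeasurableSpace X] [MeasurableSpace Y] {μ : Measure X} {ν : Measure Y}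
  [NormedAddCommGroup H] [InnerProductSpace ℝ H] {Φ : X → StrongDual ℝ H} {φ : Y → StrongDual ℝ H}

theorem integral_norm_sq_le_of_forall_integral_apply_sq_le [FiniteDimensional ℝ H]
    (hΦ : ∀ v, MemLp (fun x => Φ x v) 2 μ) (hφ : ∀ v, MemLp (fun y => φ y v) 2 ν) {c : ℝ}
    (h : ∀ v, ∫ x, Φ x v ^ 2 ∂μ ≤ c * ∫ y, φ y v ^ 2 ∂ν) :
    ∫ x, ‖Φ x‖ ^ 2 ∂μ ≤ c * ∫ y, ‖φ y‖ ^ 2 ∂ν := by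
  simp only [(stdOrthonormalBasis ℝ H).norm_dual]
  rw [integral_finsetSum _ fun i _ => (hΦ _).integrable_sq,
    integral_finsetSum _ fun i _ => (hφ _).integrable_sq, Finset.mul_sum]
  exact Finset.sum_le_sum fun i _ => h _

theorem sq_integral_le_integral_sq [IsProbabilityMeasure μ] {f : X → ℝ} (hf : MemLp f 2 μ) :
    (∫ x, f x ∂μ) ^ 2 ≤ ∫ x, f x ^ 2 ∂μ :=
  even_two.convexOn_pow.map_integral_le (continuous_pow 2).continuousOn isClosed_univ
    (ae_of_all _ fun _ => Set.mem_univ _) (hf.integrable one_le_two) hf.integrable_sq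

variable [IsProbabilityMeasure μ] [IsProbabilityMeasure ν] [TopologicalSpace X] [CompactSpace X]
  [OpensMeasurableSpace X] {C : ℝ≥0} {M : ℝ}

theorem integral_norm_le_of_finiteDimensional [FiniteDimensional ℝ H] (hΦ : Continuous Φ)
    (hm : ∀ v, AEStronglyMeasurable (fun y => φ y v) ν) (hb : ∀ᵐ y ∂ν, ‖φ y‖ ≤ C) (hM : 0 ≤ M)
    (h : ∀ v, ∫ x, Φ x v ^ 2 ∂μ ≤ M ^ 2 * ∫ y, φ y v ^ 2 ∂ν) :
    ∫ x, ‖Φ x‖ ∂μ ≤ M * C := by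
  refine le_of_sq_le_sq ?_ (by positivity)
  calc (∫ x, ‖Φ x‖ ∂μ) ^ 2
      ≤ ∫ x, ‖Φ x‖ ^ 2 ∂μ := sq_integral_le_integral_sq
        (hΦ.norm.memLp_of_hasCompactSupport (.of_compactSpace _))
    _ ≤ M ^ 2 * ∫ y, ‖φ y‖ ^ 2 ∂ν := integral_norm_sq_le_of_forall_integral_apply_sq_le
        (fun v => (hΦ.clm_apply continuous_const).memLp_of_hasCompactSupport (.of_compactSpace _))
        (memLp_apply 2 hm hb) h
    _ ≤ M ^ 2 * ∫ _, (C : ℝ) ^ 2 ∂ν := by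
        gcongr ?_ * ?_
        exact integral_mono_of_nonneg (ae_of_all _ fun y => by positivity) (integrable_const _)
          (hb.mono fun y hy => by dsimp only; gcongr)
    _ = (M * C) ^ 2 := by rw [integral_const, probReal_univ, one_smul, mul_pow]

theorem integral_norm_le_of_forall_integral_apply_sq_le (hΦ : Continuous Φ)
    (hm : ∀ v, AEStronglyMeasurable (fun y => φ y v) ν) (hb : ∀ᵐ y ∂ν, ‖φ y‖ ≤ C) (hM : 0 ≤ M)
    (h : ∀ v, ∫ x, Φ x v ^ 2 ∂μ ≤ M ^ 2 * ∫ y, φ y v ^ 2 ∂ν) :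
    ∫ x, ‖Φ x‖ ∂μ ≤ M * C := by
  refine le_of_forall_pos_le_add fun ε hε => ?_
  obtain ⟨F, _, hF⟩ := exists_finiteDimensional_norm_le_norm_domRestrict_add
    (isCompact_range hΦ).totallyBounded hε
  have hΦF : Continuous fun x => (Φ x).domRestrict F := (F.subtypeL.precomp ℝ).continuous.comp hΦ
  have hbF : ∀ᵐ y ∂ν, ‖(φ y).domRestrict F‖ ≤ C := hb.mono fun y hy =>
    opNorm_le_bound ((φ y).domRestrict F) C.coe_nonneg fun v => (φ y).le_of_opNorm_le hy v
  have hint : Integrable (fun x => ‖(Φ x).domRestrict F‖) μ :=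
    ((continuous_norm (E := StrongDual ℝ F)).comp hΦF).integrable_of_hasCompactSupport
      (.of_compactSpace _)
  calc ∫ x, ‖Φ x‖ ∂μ
      ≤ ∫ x, (‖(Φ x).domRestrict F‖ + ε) ∂μ :=
        integral_mono (hΦ.norm.integrable_of_hasCompactSupport (.of_compactSpace _))
          (hint.add (integrable_const ε)) fun x => hF _ (Set.mem_range_self x)
    _ = ∫ x, ‖(Φ x).domRestrict F‖ ∂μ + ε := by
        rw [integral_add hint (integrable_const ε), integral_const,
          probReal_univ, one_smul]
    _ ≤ M * C + ε := by
        gcongr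
        exact integral_norm_le_of_finiteDimensional hΦF (fun v => hm v) hbF hM fun v => h v

end Dual

section Fourier

variable {T : ℝ} [Fact (0 < T)]

theorem fourier_smul_convolution_fourier_smul (n : ℤ) (f g : AddCircle T → ℂ) (x : AddCircle T) :
    ((fun t => fourier n t • f t) ⋆[mul ℂ ℂ, haarAddCircle] fun t => fourier n t • g t) x =
      fourier n x • (f ⋆[mul ℂ ℂ, haarAddCircle] g) x := by
  simp only [convolution, ← integral_smul]
  refine integral_congr_ae (ae_of_all _ fun t => ?_)
  have hfourier : (fourier n x : ℂ) = fourier n t * fourier n (x - t) := by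
    simp only [fourier_apply]
    rw [← Circle.coe_mul, ← toCircle_add, ← smul_add, add_sub_cancel]
  simp only [mul_apply', smul_eq_mul, hfourier]
  ring

theorem fourierCoeff_convolution {f g : AddCircle T → ℂ} (hf : Integrable f haarAddCircle)
    (hg : Integrable g haarAddCircle) (n : ℤ) :
    fourierCoeff (f ⋆[mul ℂ ℂ, haarAddCircle] g) n = fourierCoeff f n * fourierCoeff g n := by
  simp only [fourierCoeff, ← fourier_smul_convolution_fourier_smul]
  exact integral_convolution _ (hf.fourier_smul (-n)) (hg.fourier_smul (-n))

theorem hasSum_norm_fourierCoeff_sq {f : AddCircle T → ℂ} (hf : MemLp f 2 haarAddCircle) :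
    HasSum (fun n => ‖fourierCoeff f n‖ ^ 2) (∫ t, ‖f t‖ ^ 2 ∂haarAddCircle) := by
  convert! hasSum_sq_fourierCoeff hf.toLp using 1
  · simp only [fourierCoeff_congr_ae hf.coeFn_toLp]
  · exact integral_congr_ae (hf.coeFn_toLp.mono fun t ht => by simp only [ht])

theorem integral_norm_convolution_sq_le {k f : AddCircle T → ℂ} (hk : Integrable k haarAddCircle)
    (hf : MemLp f 2 haarAddCircle)
    (hkf : MemLp (k ⋆[mul ℂ ℂ, haarAddCircle] f) 2 haarAddCircle) {M : ℝ}
    (hM : ∀ n, ‖fourierCoeff k n‖ ≤ M) :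
    ∫ x, ‖(k ⋆[mul ℂ ℂ, haarAddCircle] f) x‖ ^ 2 ∂haarAddCircle ≤
      M ^ 2 * ∫ x, ‖f x‖ ^ 2 ∂haarAddCircle := by
  refine hasSum_le (fun n => ?_) (hasSum_norm_fourierCoeff_sq hkf)
    ((hasSum_norm_fourierCoeff_sq hf).mul_left (M ^ 2))
  rw [fourierCoeff_convolution hk (hf.integrable one_le_two), norm_mul, mul_pow]
  gcongr
  exact hM n

end Fourier

section Duality

variable {T : ℝ} [Fact (0 < T)] {H : Type*} [NormedAddCommGroup H] [InnerProductSpace ℝ H]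
  {k : AddCircle T → ℝ} {M : ℝ}

theorem integral_norm_gelfandConvolution_le {φ : AddCircle T → StrongDual ℝ H} {C : ℝ≥0}
    (hk : Integrable k haarAddCircle)
    (hm : ∀ v, AEStronglyMeasurable (fun y => φ y v) haarAddCircle)
    (hb : ∀ᵐ y ∂haarAddCircle, ‖φ y‖ ≤ C)
    (hM : ∀ n, ‖fourierCoeff (fun t => (k t : ℂ)) n‖ ≤ M) :
    ∫ x, ‖gelfandConvolution hk hm hb x‖ ∂haarAddCircle ≤ M * C := by
  have hcont := continuous_gelfandConvolution hk hm hb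
  refine integral_norm_le_of_forall_integral_apply_sq_le hcont hm hb
    ((norm_nonneg _).trans (hM 0)) fun v => ?_
  have hconv : (fun x => (gelfandConvolution hk hm hb x v : ℂ)) =
      (fun t => (k t : ℂ)) ⋆[mul ℂ ℂ, haarAddCircle] fun y => (φ y v : ℂ) := by
    ext x
    simp only [gelfandConvolution_apply, convolution_mul_swap, ← Complex.ofReal_mul,
      integral_complex_ofReal]
  have hconvL2 : MemLp (fun x => (gelfandConvolution hk hm hb x v : ℂ)) 2 haarAddCircle :=
    ((hcont.clm_apply continuous_const).memLp_of_hasCompactSupport (.of_compactSpace _)).ofReal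
  have hsq := integral_norm_convolution_sq_le hk.ofReal (memLp_apply 2 hm hb v).ofReal
    (hconv ▸ hconvL2) hM
  simpa only [Complex.coe_algebraMap, ← hconv, Complex.norm_real, Real.norm_eq_abs, sq_abs]
    using hsq

theorem lintegral_enorm_integral_mul_inner_le {g h : AddCircle T → H}
    (hk : Integrable k haarAddCircle) (hM : ∀ n, ‖fourierCoeff (fun t => (k t : ℂ)) n‖ ≤ M)
    (hg : ∀ᵐ x ∂haarAddCircle, ‖g x‖ ≤ 1)
    (hm : ∀ v, AEStronglyMeasurable (fun y => ⟪h y, v⟫) haarAddCircle)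
    (hh : ∀ᵐ y ∂haarAddCircle, ‖h y‖ ≤ 1) :
    ∫⁻ x, ‖∫ y, k (x - y) * ⟪g x, h y⟫ ∂haarAddCircle‖ₑ ∂haarAddCircle ≤ ENNReal.ofReal M := by
  have hb : ∀ᵐ y ∂haarAddCircle, ‖innerSL ℝ (h y)‖ ≤ (1 : ℝ≥0) :=
    hh.mono fun y hy => (innerSL_apply_norm (𝕜 := ℝ) (h y)).trans_le hy
  have hm' (v : H) : AEStronglyMeasurable (fun y => innerSL ℝ (h y) v) haarAddCircle := by
    simpa only [innerSL_apply_apply] using hm v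
  let Φ := gelfandConvolution hk hm' hb
  have hΦ : Integrable Φ haarAddCircle :=
    (continuous_gelfandConvolution hk hm' hb).integrable_of_hasCompactSupport (.of_compactSpace _)
  calc ∫⁻ x, ‖∫ y, k (x - y) * ⟪g x, h y⟫ ∂haarAddCircle‖ₑ ∂haarAddCircle
      = ∫⁻ x, ‖Φ x (g x)‖ₑ ∂haarAddCircle := by
        simp only [Φ, gelfandConvolution_apply, innerSL_apply_apply, real_inner_comm]
    _ ≤ ∫⁻ x, ‖Φ x‖ₑ ∂haarAddCircle := lintegral_mono_ae <| hg.mono fun x hx =>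
        enorm_le_iff_norm_le.2 ((Φ x).unit_le_opNorm (g x) hx)
    _ = ENNReal.ofReal (∫ x, ‖Φ x‖ ∂haarAddCircle) :=
        (ofReal_integral_norm_eq_lintegral_enorm hΦ).symm
    _ ≤ ENNReal.ofReal M := by
        gcongr
        simpa using integral_norm_gelfandConvolution_le hk hm' hb hM

end Duality

section ArcSign

variable {T : ℝ} {r : ℝ}

theorem norm_integral_fourier_le [Fact (0 < T)] {n : ℤ} (hn : n ≠ 0) (a b : ℝ) :
    ‖∫ x in a..b, fourier (-n) (x : AddCircle T)‖ ≤ T / (Real.pi * |(n : ℝ)|) := by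
  have hT : 0 < T := Fact.out
  have hbound (x : ℝ) : ‖(T : ℂ) / (-2 * Real.pi * Complex.I * n) *
      fourier (-n) (x : AddCircle T)‖ = T / (2 * Real.pi * |(n : ℝ)|) := by
    rw [fourier_apply, norm_mul, Circle.norm_coe]
    simp [abs_of_pos hT, abs_of_pos Real.pi_pos]
  rw [intervalIntegral.integral_eq_sub_of_hasDerivAt
    (fun x _ => has_antideriv_at_fourier_neg ‹_› hn x)
    (Continuous.intervalIntegrable (by fun_prop) a b)]
  refine (norm_sub_le _ _).trans_eq ?_
  rw [hbound, hbound]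
  field_simp
  norm_num

theorem fourierCoeff_indicator_norm_lt [Fact (0 < T)] (hr0 : 0 ≤ r) (hr : r ≤ T / 2) (n : ℤ) :
    fourierCoeff ({t : AddCircle T | ‖t‖ < r}.indicator fun _ => (1 : ℂ)) n =
      (1 / T : ℝ) • ∫ x in -r..r, fourier (-n) (x : AddCircle T) := by
  have hT : 0 < T := Fact.out
  have hball : ∀ x ∈ Set.Ioc (-(T / 2)) (-(T / 2) + T),
      fourier (-n) (x : AddCircle T) • {t : AddCircle T | ‖t‖ < r}.indicator
        (fun _ => (1 : ℂ)) x =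
      (Set.Ioo (-r) r).indicator (fun x : ℝ => (fourier (-n) (x : AddCircle T) : ℂ)) x := by
    intro x hx
    have hnorm : ‖(x : AddCircle T)‖ = |x| := by
      rw [AddCircle.norm_coe_eq_abs_iff T hT.ne', abs_of_pos hT]
      exact abs_le.2 ⟨hx.1.le, by linarith [hx.2]⟩
    simp only [Set.indicator_apply, Set.mem_ofPred_eq, hnorm, abs_lt, Set.mem_Ioo]
    split_ifs <;> simp
  have hsubset : Set.Ioc (-(T / 2)) (-(T / 2) + T) ∩ Set.Ioo (-r) r = Set.Ioo (-r) r :=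
    Set.inter_eq_right.2 fun x hx => ⟨by linarith [hx.1], by linarith [hx.2]⟩
  rw [fourierCoeff_eq_intervalIntegral _ n (-(T / 2)),
    intervalIntegral.integral_of_le (by linarith), setIntegral_congr_fun measurableSet_Ioc hball,
    setIntegral_indicator measurableSet_Ioo, hsubset, ← integral_Ioc_eq_integral_Ioo,
    ← intervalIntegral.integral_of_le (by linarith)]

/-- The kernel on a circle that is `1` on the open arc of radius `r` around `0` and `-1` off it. -/
noncomputable def arcSign (r : ℝ) (t : AddCircle T) : ℝ := if ‖t‖ < r then 1 else -1

variable [Fact (0 < T)]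

theorem integrable_arcSign : Integrable (arcSign (T := T) r) haarAddCircle := by
  refine .of_bound (Measurable.aestronglyMeasurable ?_) 1 (ae_of_all _ fun t => ?_)
  · exact .ite (measurableSet_lt measurable_norm measurable_const) measurable_const
      measurable_const
  · unfold arcSign
    split_ifs <;> simp

theorem fourierCoeff_arcSign (hr0 : 0 ≤ r) (hr : r ≤ T / 2) (n : ℤ) :
    fourierCoeff (fun t : AddCircle T => (arcSign r t : ℂ)) n =
      (2 / T : ℝ) • (∫ x in -r..r, fourier (-n) (x : AddCircle T)) -
        (Pi.single 0 1 : ℤ → ℂ) n := by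
  have hdecomp : (fun t : AddCircle T => (arcSign r t : ℂ)) =
      (2 : ℂ) • {t : AddCircle T | ‖t‖ < r}.indicator (fun _ => (1 : ℂ)) +
        (-1 : ℂ) • ⇑(fourier (T := T) 0) := by
    ext t
    by_cases ht : ‖t‖ < r <;> simp [arcSign, ht]
    norm_num
  have hmeas : MeasurableSet {t : AddCircle T | ‖t‖ < r} :=
    measurableSet_lt measurable_norm measurable_const
  rw [hdecomp, fourierCoeff.add (((integrable_const 1).indicator hmeas).smul 2)
      (((map_continuous _).integrable_of_hasCompactSupport (.of_compactSpace _)).smul _),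
    Pi.add_apply, fourierCoeff.const_smul, fourierCoeff.const_smul, fourierCoeff_fourier,
    fourierCoeff_indicator_norm_lt hr0 hr]
  simp only [Complex.real_smul, smul_eq_mul]
  push_cast
  ring

theorem norm_fourierCoeff_arcSign_le (n : ℤ) :
    ‖fourierCoeff (fun t : AddCircle T => (arcSign (T / 4) t : ℂ)) n‖ ≤ 2 / Real.pi := by
  have hT : 0 < T := Fact.out
  rw [fourierCoeff_arcSign (by positivity) (by linarith)]
  rcases eq_or_ne n 0 with rfl | hn
  · have hmean : (2 / T : ℝ) • (∫ x in -(T / 4)..T / 4, fourier (-0) (x : AddCircle T)) = 1 := by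
      simp only [neg_zero, fourier_zero, intervalIntegral.integral_const, smul_smul]
      rw [show 2 / T * (T / 4 - -(T / 4)) = 1 by field_simp; norm_num, one_smul]
    rw [hmean, Pi.single_eq_same, sub_self, norm_zero]
    positivity
  · have hn1 : (1 : ℝ) ≤ |(n : ℝ)| := mod_cast Int.one_le_abs hn
    rw [Pi.single_eq_of_ne hn, sub_zero, norm_smul, Real.norm_of_nonneg (by positivity)]
    calc 2 / T * ‖∫ x in -(T / 4)..T / 4, fourier (-n) (x : AddCircle T)‖
        ≤ 2 / T * (T / (Real.pi * |(n : ℝ)|)) := by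
          gcongr
          exact norm_integral_fourier_le hn _ _
      _ = 2 / Real.pi / |(n : ℝ)| := by field_simp
      _ ≤ 2 / Real.pi := div_le_self (by positivity) hn1

end ArcSign

theorem integral_le_of_lintegral_enorm_le {α : Type*} [MeasurableSpace α] {μ : Measure α}
    {f : α → ℝ} {c : ℝ} (hc : 0 ≤ c) (h : ∫⁻ x, ‖f x‖ₑ ∂μ ≤ ENNReal.ofReal c) :
    ∫ x, f x ∂μ ≤ c :=
  (Real.le_norm_self _).trans <| (ENNReal.ofReal_le_ofReal_iff hc).1 <|
    (ofReal_norm _).trans_le <| (enorm_integral_le_lintegral_enorm f).trans h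

theorem bell_example2_hilbert_bound_general {H : Type*} [NormedAddCommGroup H]
    [InnerProductSpace ℝ H] {g h : UnitAddCircle → H} (hg : ∀ᵐ x, ‖g x‖ ≤ 1)
    (hm : ∀ v, AEStronglyMeasurable fun y => ⟪h y, v⟫) (hh : ∀ᵐ y, ‖h y‖ ≤ 1) :
    ∫⁻ x, ‖∫ y, (if dist x y < 1 / 4 then (1 : ℝ) else -1) * ⟪g x, h y⟫‖ₑ ≤
      ENNReal.ofReal (2 / Real.pi) := by
  have hvol : (volume : Measure UnitAddCircle) = haarAddCircle := by
    rw [volume_eq_smul_haarAddCircle, ENNReal.ofReal_one, one_smul]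
  rw [hvol] at hg hm hh ⊢
  simp only [dist_eq_norm]
  exact lintegral_enorm_integral_mul_inner_le integrable_arcSign norm_fourierCoeff_arcSign_le
    hg hm hh

/-- Let `𝕋 = ℝ/ℤ` with its Haar probability measure, `f(x,y) = 1` if `dist x y < 1/4` and
`-1` otherwise, and let `H` be a real inner product space. For all measurable
`g, h : 𝕋 → H` of unit norm a.e., `∬ f(x,y) ⟨g(x), h(y)⟩ ≤ 2/π`. -/
theorem bell_example2_hilbert_bound (H : Type*) [NormedAddCommGroup H]
    [InnerProductSpace ℝ H] [MeasurableSpace H] [BorelSpace H]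
    (g h : UnitAddCircle → H) (hgm : Measurable g) (hhm : Measurable h)
    (hg1 : ∀ᵐ x : UnitAddCircle, ‖g x‖ = 1)
    (hh1 : ∀ᵐ y : UnitAddCircle, ‖h y‖ = 1) :
    (∫ x : UnitAddCircle, ∫ y : UnitAddCircle,
        (if dist x y < 1/4 then (1:ℝ) else -1) * ⟪g x, h y⟫) ≤ 2 / Real.pi :=
  integral_le_of_lintegral_enorm_le (by positivity) <| bell_example2_hilbert_bound_general
    (hg1.mono fun _ => le_of_eq)
    (fun v => ((continuous_id.inner continuous_const).measurable.comp hhm).aestronglyMeasurable)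
    (hh1.mono fun _ => le_of_eq)
end

section
/- Define g, h : (0,1) → ℝ² by g(x) = (cos πx, sin πx) and h(y) = (sin πy, −cos πy). Then ‖g(x)‖ = ‖h(y)‖ = 1 for all x, y, and ∫₀¹∫₀¹ f(x,y) ⟨g(x), h(y)⟩ dx dy = 2/π, where ⟨·,·⟩ is the Euclidean inner product on ℝ². -/
open MeasureTheory Real
open scoped RealInnerProductSpace

/-!
The vectors `g x` and `h y` sit on the unit circle at angles `πx` and `πy - π/2`, so their inner
product is `sin (πy - πx)`. Where `0 < x, y < 1`, its sign is `1` for `x < y` and `-1` for `y < x`,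
so the integrand is `|sin (πy - πx)|`. For each `x`, the angle `πy - πx` with `y ∈ (0, 1)` runs
through one full period of `|sin|`, so the inner integral does not depend on `x`.
-/

/-- The point of the unit circle at angle `θ`, as a vector of the Euclidean plane. Both `g x` and
`h y` are of this form, which reduces their norms and inner products to angle differences. -/
noncomputable def unitVec (θ : ℝ) : EuclideanSpace ℝ (Fin 2) :=
  !₂[cos θ, sin θ]

theorem inner_unitVec_unitVec (α β : ℝ) : ⟪unitVec α, unitVec β⟫ = cos (β - α) := by
  simp [unitVec, PiLp.inner_apply, Fin.sum_univ_two, cos_sub]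

theorem norm_unitVec (θ : ℝ) : ‖unitVec θ‖ = 1 := by
  rw [norm_eq_sqrt_real_inner, inner_unitVec_unitVec, sub_self, cos_zero, sqrt_one]

theorem unitVec_sub_pi_div_two (θ : ℝ) : unitVec (θ - π / 2) = !₂[sin θ, -cos θ] := by
  rw [unitVec, cos_sub_pi_div_two, sin_sub_pi_div_two]

theorem inner_unitVec_unitVec_sub_pi_div_two (α β : ℝ) :
    ⟪unitVec α, unitVec (β - π / 2)⟫ = sin (β - α) := by
  rw [inner_unitVec_unitVec, sub_right_comm, cos_sub_pi_div_two]

theorem ite_lt_mul_sin_sub_eq_abs {α β : ℝ} (h : |β - α| ≤ π) :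
    (if α < β then 1 else -1) * sin (β - α) = |sin (β - α)| := by
  rw [abs_sin_eq_sin_abs_of_abs_le_pi h]
  split_ifs with hlt
  · rw [one_mul, abs_of_pos (sub_pos.mpr hlt)]
  · rw [neg_one_mul, abs_of_nonpos (sub_nonpos.mpr (not_lt.mp hlt)), sin_neg]

theorem periodic_abs_sin : Function.Periodic (fun t : ℝ => |sin t|) π := fun t => by
  simp only [sin_add_pi, abs_neg]

theorem integral_abs_sin_period (a : ℝ) : ∫ t in a..a + π, |sin t| = 2 := by
  calc ∫ t in a..a + π, |sin t|
      = ∫ t in 0..0 + π, |sin t| := periodic_abs_sin.intervalIntegral_add_eq a 0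
    _ = ∫ t in 0..π, sin t := by
        rw [zero_add]
        refine intervalIntegral.integral_congr fun t ht => abs_of_nonneg ?_
        exact sin_nonneg_of_mem_Icc (Set.uIcc_of_le pi_pos.le ▸ ht)
    _ = 2 := by
        rw [integral_sin, cos_zero, cos_pi]
        norm_num

theorem integral_abs_sin_pi_mul_sub (d : ℝ) : ∫ y in (0 : ℝ)..1, |sin (π * y - d)| = 2 / π := by
  have hend : π * 1 - d = π * 0 - d + π := by ring
  rw [intervalIntegral.integral_comp_mul_sub (fun t => |sin t|) pi_ne_zero, hend,
    integral_abs_sin_period, smul_eq_mul, inv_mul_eq_div]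

theorem setIntegral_ite_lt_mul_sin_pi_mul_sub {x : ℝ} (hx : x ∈ Set.Icc (0 : ℝ) 1) :
    ∫ y in Set.Ioo (0 : ℝ) 1, (if x < y then 1 else -1) * sin (π * y - π * x) = 2 / π := by
  have hkernel : Set.EqOn (fun y => (if x < y then 1 else -1) * sin (π * y - π * x))
      (fun y => |sin (π * y - π * x)|) (Set.Ioo 0 1) := by
    intro y hy
    have hangle : |π * y - π * x| ≤ π :=
      abs_sub_le_of_nonneg_of_le (mul_nonneg pi_pos.le hy.1.le)
        (mul_le_of_le_one_right pi_pos.le hy.2.le) (mul_nonneg pi_pos.le hx.1)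
        (mul_le_of_le_one_right pi_pos.le hx.2)
    simpa only [mul_lt_mul_iff_right₀ pi_pos] using ite_lt_mul_sin_sub_eq_abs hangle
  rw [setIntegral_congr_fun measurableSet_Ioo hkernel, ← integral_Ioc_eq_integral_Ioo,
    ← intervalIntegral.integral_of_le zero_le_one, integral_abs_sin_pi_mul_sub]

/-- Let `f : (0,1)×(0,1) → ℝ` be `1` if `x < y` and `-1` otherwise. With
`g(x) = (cos πx, sin πx)` and `h(y) = (sin πy, -cos πy)` in `ℝ²`, both are unit vectors
and `∫∫ f(x,y) ⟨g(x), h(y)⟩ = 2/π`. -/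
theorem bell_example1_dim2_attained
    (g h : ℝ → EuclideanSpace ℝ (Fin 2))
    (hg : ∀ x : ℝ, g x = (WithLp.equiv 2 (Fin 2 → ℝ)).symm ![Real.cos (π * x), Real.sin (π * x)])
    (hh : ∀ y : ℝ, h y = (WithLp.equiv 2 (Fin 2 → ℝ)).symm ![Real.sin (π * y), -Real.cos (π * y)]) :
    (∀ x, ‖g x‖ = 1) ∧ (∀ y, ‖h y‖ = 1) ∧
    (∫ x in Set.Ioo (0:ℝ) 1, ∫ y in Set.Ioo (0:ℝ) 1,
        (if x < y then (1:ℝ) else -1) * ⟪g x, h y⟫) = 2 / π := by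
  have hg_unit (x : ℝ) : g x = unitVec (π * x) := hg x
  have hh_unit (y : ℝ) : h y = unitVec (π * y - π / 2) :=
    (hh y).trans (unitVec_sub_pi_div_two (π * y)).symm
  have hslice : ∀ x ∈ Set.Ioo (0 : ℝ) 1, ∫ y in Set.Ioo (0 : ℝ) 1,
      (if x < y then (1 : ℝ) else -1) * ⟪g x, h y⟫ = 2 / π := by
    intro x hx
    simp only [hg_unit, hh_unit, inner_unitVec_unitVec_sub_pi_div_two]
    exact setIntegral_ite_lt_mul_sin_pi_mul_sub (Set.Ioo_subset_Icc_self hx)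
  refine ⟨fun x => hg_unit x ▸ norm_unitVec _, fun y => hh_unit y ▸ norm_unitVec _, ?_⟩
  rw [setIntegral_congr_fun measurableSet_Ioo hslice]
  simp
end

section
/- Let H be a real inner product space and let h : (0,1) → H be a measurable function with ‖h(y)‖ = 1 for almost every y. Define G : [0,1] → H by G(x) = ∫₀¹ f(x,y) h(y) dy. Then: (i) G is Lipschitz with Lipschitz constant 2; (ii) for almost every x ∈ (0,1), G is differentiable at x with G'(x) = −2 h(x); (iii) G(0) + G(1) = 0. -/
open MeasureTheory

/-!
For `x ∈ [0, 1]` one has `G x = ∫ₓ¹ h - ∫₀ˣ h`. Hence `G x - G y = -2 ∫_y^x h`, so `G` is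
`2`-Lipschitz as `‖h‖ = 1` a.e., the Lebesgue differentiation theorem gives `G' = -2 h` a.e., and
`G 0 = ∫₀¹ h = -G 1`.

As `H` is not assumed separable, it must be shown that the Borel function `h` is Bochner integrable,
that is, that it has separable range. If not, the range of `h` contains an uncountable `ε`-separated
set; the balls of radius `ε / 2` about its points have disjoint preimages, all of whose unions are
Borel. Collapsing each of these preimages to a point yields a measurable map `f` from a standard
Borel space onto an uncountable discrete space `Y`. A section of `f` is a measurable embedding of
`Y`, its range being the set of points fixed by the measurable map section-after-`f`. So `Y` is an
uncountable standard Borel space with only measurable subsets, which is impossible because `ℝ` has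
more subsets than Borel subsets.
-/

open Set Metric TopologicalSpace
open scoped Cardinal ENNReal Interval NNReal

section SeparableRange

theorem exists_not_measurableSet_real : ∃ s : Set ℝ, ¬ MeasurableSet s := by
  by_contra! hall
  have hle : #{s : Set ℝ | MeasurableSet s} ≤ 𝔠 := by
    have hcount := (MeasurableSpace.countable_countableGeneratingSet (α := ℝ)).le_aleph0
    have := MeasurableSpace.cardinal_measurableSet_le_continuum
      (hcount.trans Cardinal.aleph0_le_continuum)
    rwa [MeasurableSpace.generateFrom_countableGeneratingSet] at this
  have huniv : {s : Set ℝ | MeasurableSet s} = univ := eq_univ_of_forall hall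
  rw [huniv, Cardinal.mk_univ, Cardinal.mk_set, Cardinal.mk_real] at hle
  exact (Cardinal.cantor _).not_ge hle

theorem countable_of_standardBorelSpace_of_discreteMeasurableSpace (X : Type*) [MeasurableSpace X]
    [StandardBorelSpace X] [DiscreteMeasurableSpace X] : Countable X := by
  by_contra hX
  obtain ⟨s, hs⟩ := exists_not_measurableSet_real
  let e : X ≃ᵐ ℝ := PolishSpace.measurableEquivOfNotCountable hX
    (not_countable_iff.2 inferInstance)
  exact hs (e.measurableSet_preimage.1 .of_discrete)

variable {X : Type*} [MeasurableSpace X] [StandardBorelSpace X]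

theorem countable_of_measurable_surjective_of_discreteMeasurableSpace {Y : Type*}
    [MeasurableSpace Y] [DiscreteMeasurableSpace Y] {f : X → Y} (hf : Measurable f)
    (hsurj : f.Surjective) : Countable Y := by
  obtain ⟨g, hfg⟩ := hsurj.hasRightInverse
  have hg : Measurable g := .of_discrete
  have hrange : range g = {x | g (f x) = x} :=
    Subset.antisymm (range_subset_iff.2 fun y => congrArg g (hfg y)) fun x hx => ⟨f x, hx⟩
  have hmeas : MeasurableSet (range g) :=
    hrange ▸ measurableSet_eq_fun (hg.comp hf) measurable_id
  have hemb : MeasurableEmbedding g := .of_measurable_inverse hg hmeas hf hfg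
  have : StandardBorelSpace (range g) := hmeas.standardBorel
  have : DiscreteMeasurableSpace (range g) :=
    ⟨fun _ => hemb.equivRange.measurableSet_preimage.1 .of_discrete⟩
  have := countable_of_standardBorelSpace_of_discreteMeasurableSpace (range g)
  exact hemb.equivRange.toEquiv.countable_iff.2 this

theorem countable_of_pairwise_disjoint_of_measurableSet_biUnion {ι : Type*} {U : ι → Set X}
    (hne : ∀ i, (U i).Nonempty) (hdisj : Pairwise (Function.onFun Disjoint U))
    (hmeas : ∀ s : Set ι, MeasurableSet (⋃ i ∈ s, U i)) : Countable ι := by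
  have : StandardBorelSpace (⋃ i, U i) :=
    MeasurableSet.standardBorel (by simpa only [biUnion_univ] using hmeas univ)
  choose f hf using fun x : ⋃ i, U i => mem_iUnion.1 x.2
  have f_eq_iff (x : ⋃ i, U i) (i : ι) : f x = i ↔ x.1 ∈ U i :=
    ⟨fun h => h ▸ hf x, fun h => hdisj.eq (not_disjoint_iff.2 ⟨x, hf x, h⟩)⟩
  let : MeasurableSpace ι := ⊤
  have hf_meas : Measurable f := fun s _ => by
    have hpre : f ⁻¹' s = Subtype.val ⁻¹' ⋃ i ∈ s, U i := by
      ext x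
      simp only [mem_preimage, mem_iUnion, ← f_eq_iff, exists_prop, exists_eq_right']
    exact hpre ▸ measurable_subtype_coe (hmeas s)
  refine countable_of_measurable_surjective_of_discreteMeasurableSpace hf_meas fun i => ?_
  obtain ⟨x, hx⟩ := hne i
  exact ⟨⟨x, mem_iUnion_of_mem i hx⟩, (f_eq_iff _ i).2 hx⟩

section PseudoEMetricSpace

variable {M : Type*} [PseudoEMetricSpace M]

theorem exists_maximal_isSeparated (ε : ℝ≥0∞) (s : Set M) :
    ∃ N, Maximal (fun N => N ⊆ s ∧ IsSeparated ε N) N :=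
  zorn_subset {N | N ⊆ s ∧ IsSeparated ε N} fun c hc hchain => ⟨⋃₀ c,
    ⟨sUnion_subset fun _ hN => (hc hN).1,
      (pairwise_sUnion hchain.directedOn).2 fun _ hN => (hc hN).2⟩,
    fun _ => subset_sUnion_of_mem⟩

theorem isSeparable_of_forall_isSeparated_countable {s : Set M}
    (hs : ∀ ε : ℝ≥0∞, ε ≠ 0 → ∀ N ⊆ s, IsSeparated ε N → N.Countable) : IsSeparable s := by
  obtain ⟨t, -, ht, hst⟩ := EMetric.subset_countable_closure_of_almost_dense_set s fun ε hε => by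
    obtain ⟨δ, hδ, hδε⟩ := ENNReal.lt_iff_exists_nnreal_btwn.1 hε
    obtain ⟨N, hN⟩ := exists_maximal_isSeparated (δ : ℝ≥0∞) s
    have hcover := isCover_iff_subset_iUnion_closedEBall.1 (IsCover.of_maximal_isSeparated hN)
    exact ⟨N, hs δ hδ.ne' N hN.prop.1 hN.prop.2,
      hcover.trans (iUnion₂_mono fun _ _ => closedEBall_subset_closedEBall hδε.le)⟩
  exact ⟨t, ht, hst⟩

theorem pairwise_disjoint_eball_half_of_isSeparated {ε : ℝ≥0∞} {N : Set M}
    (hN : IsSeparated ε N) :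
    Pairwise (Function.onFun Disjoint fun y : N => eball (y : M) (ε / 2)) := fun y z hyz => by
  refine eball_disjoint ?_
  rw [ENNReal.add_halves]
  exact (hN y.2 z.2 (Subtype.coe_ne_coe.2 hyz)).le

variable [MeasurableSpace M] [OpensMeasurableSpace M] {h : X → M}

theorem countable_of_isSeparated_of_subset_range_of_measurable (hm : Measurable h) {ε : ℝ≥0∞}
    (hε : ε ≠ 0) {N : Set M} (hNh : N ⊆ range h) (hN : IsSeparated ε N) : N.Countable := by
  refine countable_of_pairwise_disjoint_of_measurableSet_biUnion
    (U := fun y : N => h ⁻¹' eball (y : M) (ε / 2)) (fun y => ?_) (fun y z hyz => ?_) fun s => ?_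
  · obtain ⟨x, hx⟩ := hNh y.2
    exact ⟨x, hx ▸ mem_eball_self (ENNReal.half_pos hε)⟩
  · exact (pairwise_disjoint_eball_half_of_isSeparated hN hyz).preimage h
  · rw [← preimage_iUnion₂]
    exact hm (isOpen_biUnion fun _ _ => isOpen_eball).measurableSet

theorem isSeparable_range_of_measurable (hm : Measurable h) : IsSeparable (range h) :=
  isSeparable_of_forall_isSeparated_countable fun _ hε _ =>
    countable_of_isSeparated_of_subset_range_of_measurable hm hε

end PseudoEMetricSpace

theorem stronglyMeasurable_of_measurable_of_standardBorelSpace {M : Type*} [TopologicalSpace M]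
    [PseudoMetrizableSpace M] [MeasurableSpace M] [BorelSpace M] {h : X → M} (hm : Measurable h) :
    StronglyMeasurable h := by
  let := pseudoMetrizableSpacePseudoMetric M
  exact stronglyMeasurable_iff_measurable_separable.2 ⟨hm, isSeparable_range_of_measurable hm⟩

end SeparableRange

section SignIntegral

variable {E : Type*} [NormedAddCommGroup E] [NormedSpace ℝ E] {a b : ℝ} {h : ℝ → E}

/-- The integral operator on `(a, b)` whose kernel is `1` at `(x, y)` if `x < y` and `-1` otherwise,
so that `G` is `signIntegral 0 1 h`. It is defined for all real `x`, although only the values on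
`[a, b]` matter. -/
noncomputable def signIntegral (a b : ℝ) (h : ℝ → E) (x : ℝ) : E :=
  ∫ y in Ioo a b, (if x < y then (1 : ℝ) else -1) • h y

theorem signIntegral_eq_integral_sub_integral (hh : IntervalIntegrable h volume a b) {x : ℝ}
    (hx : x ∈ Icc a b) : signIntegral a b h x = (∫ y in x..b, h y) - ∫ y in a..x, h y := by
  have hax : IntervalIntegrable h volume a x :=
    hh.mono_set (uIcc_subset_uIcc_left (Icc_subset_uIcc hx))
  have hxb : IntervalIntegrable h volume x b :=
    hh.mono_set (uIcc_subset_uIcc_right (Icc_subset_uIcc hx))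
  have left : EqOn (fun y => (if x < y then (1 : ℝ) else -1) • h y) (fun y => -h y) (Ioc a x) :=
    fun y hy => by simp only [hy.2.not_gt, if_false, neg_smul, one_smul]
  have right : EqOn (fun y => (if x < y then (1 : ℝ) else -1) • h y) h (Ioc x b) :=
    fun y hy => by simp only [hy.1, if_true, one_smul]
  rw [signIntegral, ← integral_Ioc_eq_integral_Ioo, ← Ioc_union_Ioc_eq_Ioc hx.1 hx.2,
    setIntegral_union (Ioc_disjoint_Ioc_of_le le_rfl) measurableSet_Ioc
      (hax.1.neg.congr_fun left.symm measurableSet_Ioc)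
      (hxb.1.congr_fun right.symm measurableSet_Ioc),
    setIntegral_congr_fun measurableSet_Ioc left, setIntegral_congr_fun measurableSet_Ioc right,
    integral_neg, ← intervalIntegral.integral_of_le hx.1, ← intervalIntegral.integral_of_le hx.2]
  abel

theorem signIntegral_eq_integral_sub_two_smul (hh : IntervalIntegrable h volume a b) {x : ℝ}
    (hx : x ∈ Icc a b) :
    signIntegral a b h x = (∫ y in a..b, h y) - (2 : ℝ) • ∫ y in a..x, h y := by
  rw [signIntegral_eq_integral_sub_integral hh hx,
    ← intervalIntegral.integral_add_adjacent_intervals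
      (hh.mono_set (uIcc_subset_uIcc_left (Icc_subset_uIcc hx)))
      (hh.mono_set (uIcc_subset_uIcc_right (Icc_subset_uIcc hx))), two_smul]
  abel

theorem signIntegral_left_add_signIntegral_right (hab : a ≤ b)
    (hh : IntervalIntegrable h volume a b) : signIntegral a b h a + signIntegral a b h b = 0 := by
  rw [signIntegral_eq_integral_sub_integral hh (left_mem_Icc.2 hab),
    signIntegral_eq_integral_sub_integral hh (right_mem_Icc.2 hab),
    intervalIntegral.integral_same, intervalIntegral.integral_same]
  abel

theorem signIntegral_sub_signIntegral (hh : IntervalIntegrable h volume a b) {x y : ℝ}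
    (hx : x ∈ Icc a b) (hy : y ∈ Icc a b) :
    signIntegral a b h x - signIntegral a b h y = (-2 : ℝ) • ∫ t in y..x, h t := by
  rw [signIntegral_eq_integral_sub_two_smul hh hx, signIntegral_eq_integral_sub_two_smul hh hy,
    sub_sub_sub_cancel_left, ← smul_sub, intervalIntegral.integral_interval_sub_left
      (hh.mono_set (uIcc_subset_uIcc_left (Icc_subset_uIcc hy)))
      (hh.mono_set (uIcc_subset_uIcc_left (Icc_subset_uIcc hx))),
    intervalIntegral.integral_symm, smul_neg, neg_smul]

theorem lipschitzOnWith_signIntegral (hh : IntervalIntegrable h volume a b) {C : ℝ≥0}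
    (hC : ∀ᵐ y ∂volume.restrict (Ioo a b), ‖h y‖ ≤ C) :
    LipschitzOnWith (2 * C) (signIntegral a b h) (Icc a b) := by
  rw [Measure.restrict_congr_set Ioo_ae_eq_Ioc] at hC
  refine LipschitzOnWith.of_dist_le_mul fun x hx y hy => ?_
  have hsub : Ι y x ⊆ Ioc a b := Ioc_subset_Ioc (le_inf hy.1 hx.1) (sup_le hy.2 hx.2)
  have hbound : ∀ᵐ t, t ∈ Ι y x → ‖h t‖ ≤ C :=
    ((ae_restrict_iff' measurableSet_Ioc).1 hC).mono fun t ht htI => ht (hsub htI)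
  calc dist (signIntegral a b h x) (signIntegral a b h y)
      = 2 * ‖∫ t in y..x, h t‖ := by
        rw [dist_eq_norm, signIntegral_sub_signIntegral hh hx hy, norm_smul, norm_neg,
          Real.norm_two]
    _ ≤ 2 * (C * |x - y|) := by
        gcongr
        exact intervalIntegral.norm_integral_le_of_norm_le_const_ae hbound
    _ = (2 * C : ℝ≥0) * dist x y := by rw [Real.dist_eq]; push_cast; ring

theorem ae_hasDerivAt_signIntegral [CompleteSpace E] (hh : IntervalIntegrable h volume a b) :
    ∀ᵐ x ∂volume.restrict (Ioo a b), HasDerivAt (signIntegral a b h) ((-2 : ℝ) • h x) x := by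
  rw [ae_restrict_iff' measurableSet_Ioo]
  filter_upwards [hh.ae_hasDerivAt_integral] with x hderiv hx
  have hprim : HasDerivAt (fun u => ∫ t in a..u, h t) (h x) x :=
    hderiv (Icc_subset_uIcc (Ioo_subset_Icc_self hx)) a left_mem_uIcc
  rw [neg_smul]
  refine ((hprim.const_smul (2 : ℝ)).const_sub (∫ t in a..b, h t)).congr_of_eventuallyEq ?_
  filter_upwards [Icc_mem_nhds hx.1 hx.2] with u hu
  exact signIntegral_eq_integral_sub_two_smul hh hu

end SignIntegral

theorem bell_example1_G_properties_general {E : Type*} [NormedAddCommGroup E] [NormedSpace ℝ E]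
    [CompleteSpace E] {a b : ℝ} (hab : a ≤ b) {h : ℝ → E}
    (hm : AEStronglyMeasurable h (volume.restrict (Ioo a b))) {C : ℝ≥0}
    (hC : ∀ᵐ y ∂volume.restrict (Ioo a b), ‖h y‖ ≤ C) {G : ℝ → E}
    (hG : ∀ x, G x = ∫ y in Ioo a b, (if x < y then (1 : ℝ) else -1) • h y) :
    LipschitzOnWith (2 * C) G (Icc a b) ∧
    (∀ᵐ x ∂volume.restrict (Ioo a b), HasDerivAt G ((-2 : ℝ) • h x) x) ∧
    G a + G b = 0 := by
  obtain rfl : G = signIntegral a b h := funext hG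
  have hh : IntervalIntegrable h volume a b :=
    (intervalIntegrable_iff_integrableOn_Ioo_of_le hab).2
      (.of_bound measure_Ioo_lt_top hm C hC)
  exact ⟨lipschitzOnWith_signIntegral hh hC,
    ae_hasDerivAt_signIntegral hh, signIntegral_left_add_signIntegral_right hab hh⟩

/-- Let `f : (0,1)×(0,1) → ℝ` be `1` if `x < y` and `-1` otherwise, let `h : (0,1) → H`
be measurable of unit norm a.e., and `G(x) = ∫₀¹ f(x,y) h(y) dy`. Then `G` is
2-Lipschitz on `[0,1]`, `G'(x) = -2 h(x)` for a.e. `x ∈ (0,1)`, and `G(0) + G(1) = 0`. -/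
theorem bell_example1_G_properties (H : Type*) [NormedAddCommGroup H]
    [InnerProductSpace ℝ H] [MeasurableSpace H] [BorelSpace H] [CompleteSpace H]
    (h : ℝ → H) (hm : Measurable h)
    (h1 : ∀ᵐ y ∂(volume.restrict (Set.Ioo (0:ℝ) 1)), ‖h y‖ = 1)
    (G : ℝ → H)
    (hG : ∀ x : ℝ, G x = ∫ y in Set.Ioo (0:ℝ) 1, (if x < y then (1:ℝ) else -1) • h y) :
    LipschitzOnWith 2 G (Set.Icc 0 1) ∧
    (∀ᵐ x ∂(volume.restrict (Set.Ioo (0:ℝ) 1)), HasDerivAt G ((-2 : ℝ) • h x) x) ∧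
    G 0 + G 1 = 0 := by
  simpa only [mul_one] using bell_example1_G_properties_general zero_le_one
    (stronglyMeasurable_of_measurable_of_standardBorelSpace hm).aestronglyMeasurable (C := 1)
    (h1.mono fun _ => le_of_eq) hG
end
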